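/- arXiv:1004.0327 — 3 statements merged into one kernel-verified Lean document; each statement's English description precedes it below -/
import Mathlib

section
/- Let d, g, m be natural numbers with g ≥ 2d and m ≤ 2g−2. The function Z_{g,m}(z) = (2/(√(1+4z)+1))^{2g−2−m} · (1+4z)^{(g−1)/2}, defined for real z ∈ (−1/4, 1/4), is real-analytic at 0, and its d-th Taylor coefficient at 0 (i.e. Z_{g,m}^{(d)}(0)/d!) equals [g!·(2g−2−m)! / ((g−2d)!·d!·(2g−2−m+d)!)] · Σ_{k=0}^{d} [(−g/2+m/2+1−d)_k · (−g/2+(m+3)/2−d)_k · (−d)_k] / [((g+1)/2−d)_k · (g/2+1−d)_k · k!], where (x)_k = x(x+1)⋯(x+k−1) denotes the rising factorial. -/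
/-- The generating function `Z_{g,m}(z) = (2/(√(1+4z)+1))^{2g−2−m} · (1+4z)^{(g−1)/2}`. -/
noncomputable def Zgen (g m : ℝ) (z : ℝ) : ℝ :=
  (2 / (Real.sqrt (1 + 4 * z) + 1)) ^ (2 * g - 2 - m) * (1 + 4 * z) ^ ((g - 1) / 2)

/-! With `1 + 4z = ((1 + q) / (1 - q))²` one has `√(1 + 4z) + 1 = 2 / (1 - q)`, so `Z_{g,m}` becomes
`(1 + q)^(g - 1) (1 - q)^(g - 1 - m)`, while `z = q / (1 - q)²`. Lagrange inversion then gives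
`[z^d] Z_{g,m} = [q^d] (1 + q)^g (1 - q)^h` with `h = g - 2 - m + 2d`. By the Leibniz rule, `d!`
times this coefficient is `V₁ = ∑ₖ (-1)^k C(d,k) g^{↓(d-k)} h^{↓k}`. Without inversion:
`∂_z Z_{g,m}` is a combination of two shifted copies of `Z`, and `V₁` obeys the same recurrence.

Up to the factor `g^{↓2d}`, the `₃F₂` is the sum `V₂ = ∑ₖ (-1)^k C(d,k) g^{↓2(d-k)} h^{↓2k}`.
The three-term relations among the `V₁` yield `V₂ = (g + h - 2d + 1)_d V₁` by induction on `d`,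
and `g + h - 2d + 1 = 2g - 1 - m`. -/

section Pochhammer

variable {K : Type*} [Field K]

lemma descPochhammer_add_eval {R : Type*} [CommRing R] (n k : ℕ) (x : R) :
    (descPochhammer R (n + k)).eval x
      = (descPochhammer R n).eval x * (descPochhammer R k).eval (x - n) := by
  simp [← descPochhammer_mul]

lemma ascPochhammer_two_mul_eval [NeZero (2 : K)] (k : ℕ) (x : K) :
    (ascPochhammer K (2 * k)).eval (2 * x)
      = 4 ^ k * ((ascPochhammer K k).eval x * (ascPochhammer K k).eval (x + 1 / 2)) := by
  induction k with
  | zero => simp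
  | succ k ih =>
    simp only [show 2 * (k + 1) = 2 * k + 1 + 1 by ring, ascPochhammer_succ_eval, ih]
    push_cast
    field_simp
    ring

lemma descPochhammer_two_mul_eval [NeZero (2 : K)] (k : ℕ) (x : K) :
    (descPochhammer K (2 * k)).eval x
      = 4 ^ k * ((ascPochhammer K k).eval (-x / 2) * (ascPochhammer K k).eval ((1 - x) / 2)) := by
  have duplication := ascPochhammer_two_mul_eval k (-x / 2)
  rwa [mul_div_cancel₀ _ two_ne_zero, ascPochhammer_eval_neg_eq_descPochhammer, pow_mul, neg_one_sq,
    one_pow, one_mul, show -x / 2 + 1 / 2 = (1 - x) / 2 by ring] at duplication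

lemma descPochhammer_two_mul_add_eval [NeZero (2 : K)] (k j : ℕ) (x : K) :
    (descPochhammer K (2 * (k + j))).eval x
      = (descPochhammer K (2 * j)).eval x
        * (4 ^ k * ((ascPochhammer K k).eval ((x + 1) / 2 - (k + j : ℕ))
          * (ascPochhammer K k).eval (x / 2 + 1 - (k + j : ℕ)))) := by
  have duplication := ascPochhammer_two_mul_eval k ((x + 1) / 2 - (k + j : ℕ))
  have shift : (x + 1) / 2 - (k + j : ℕ) + 1 / 2 = x / 2 + 1 - (k + j : ℕ) := by
    field_simp
    ring
  have double : 2 * ((x + 1) / 2 - (k + j : ℕ)) = x - (2 * j : ℕ) - (2 * k : ℕ) + 1 := by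
    push_cast
    field_simp
    ring
  rw [shift, double, ← descPochhammer_eval_eq_ascPochhammer] at duplication
  rw [show 2 * (k + j) = 2 * j + 2 * k by ring, descPochhammer_add_eval, duplication]

lemma descPochhammer_natCast_eval_eq_div [CharZero K] {n k : ℕ}
    (hk : k ≤ n) : (descPochhammer K k).eval (n : K) = n.factorial / (n - k).factorial := by
  rw [descPochhammer_eval_eq_descFactorial,
    eq_div_iff (Nat.cast_ne_zero.2 (Nat.factorial_ne_zero _))]
  exact_mod_cast (mul_comm _ _).trans (Nat.factorial_mul_descFactorial hk)

lemma ascPochhammer_natCast_add_one_eval_eq_div [CharZero K] (n k : ℕ) :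
    (ascPochhammer K k).eval (n + 1 : K) = (n + k).factorial / n.factorial := by
  rw [← Nat.cast_add_one, ascPochhammer_nat_eq_natCast_ascFactorial,
    eq_div_iff (Nat.cast_ne_zero.2 (Nat.factorial_ne_zero _))]
  exact_mod_cast (mul_comm _ _).trans (Nat.factorial_mul_ascFactorial n k)

lemma ascPochhammer_neg_natCast_eval_div_factorial [CharZero K] (d k : ℕ) :
    (ascPochhammer K k).eval (-(d : K)) / k.factorial = (-1) ^ k * d.choose k := by
  rw [ascPochhammer_eval_neg_eq_descPochhammer, Nat.cast_choose_eq_descPochhammer_div,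
    mul_div_assoc]

end Pochhammer

/-- The sum `∑ₖ (-1)^k C(d,k) g^{↓r(d-k)} h^{↓rk}`, an alternating analogue of the Chu–Vandermonde
sum with falling factorials taken in steps of `r`. For `r = 1` it is `d!` times the coefficient
of `q^d` in `(1 + q)^g (1 - q)^h`. -/
noncomputable def altVandermonde {R : Type*} [CommRing R] (r d : ℕ) (g h : R) : R :=
  ∑ k ∈ Finset.range (d + 1), (d.choose k : R) * ((-1) ^ k
    * (descPochhammer R (r * (d - k))).eval g * (descPochhammer R (r * k)).eval h)

namespace altVandermonde

variable {R : Type*} [CommRing R]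

@[simp]
lemma zero (r : ℕ) (g h : R) : altVandermonde r 0 g h = 1 := by
  simp [altVandermonde]

lemma succ (r d : ℕ) (g h : R) :
    altVandermonde r (d + 1) g h
      = (descPochhammer R r).eval g * altVandermonde r d (g - r) h
        - (descPochhammer R r).eval h * altVandermonde r d g (h - r) := by
  have desc_mul_succ (k : ℕ) (x : R) : (descPochhammer R (r * (k + 1))).eval x
      = (descPochhammer R r).eval x * (descPochhammer R (r * k)).eval (x - r) := by
    rw [mul_add_one, add_comm, descPochhammer_add_eval]
  unfold altVandermonde
  rw [Finset.sum_choose_succ_mul (fun k j => (-1) ^ k * (descPochhammer R (r * j)).eval g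
      * (descPochhammer R (r * k)).eval h) d,
    sub_eq_add_neg, ← neg_mul, Finset.mul_sum, Finset.mul_sum]
  congr 1 <;> refine Finset.sum_congr rfl fun k hk => ?_
  · rw [Nat.succ_sub (Finset.mem_range_succ_iff.1 hk), Nat.succ_eq_add_one, desc_mul_succ]
    ring
  · rw [desc_mul_succ]
    ring

lemma swap (r d : ℕ) (g h : R) :
    altVandermonde r d h g = (-1) ^ d * altVandermonde r d g h := by
  induction d generalizing g h with
  | zero => simp
  | succ d ih =>
    rw [succ, succ, ih g (h - r), ih (g - r) h]
    ring

lemma one_succ (d : ℕ) (g h : R) :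
    altVandermonde 1 (d + 1) g h
      = g * altVandermonde 1 d (g - 1) h - h * altVandermonde 1 d g (h - 1) := by
  simpa using succ 1 d g h

lemma two_succ (d : ℕ) (g h : R) :
    altVandermonde 2 (d + 1) g h
      = g * (g - 1) * altVandermonde 2 d (g - 2) h
        - h * (h - 1) * altVandermonde 2 d g (h - 2) := by
  simpa [descPochhammer_succ_eval] using succ 2 d g h

-- The relation `(1 + q)^g = (1 + q) (1 + q)^(g - 1)`, read off at `q^(d + 1)`.
lemma one_succ_eq_sub_one_left (d : ℕ) (g h : R) :
    altVandermonde 1 (d + 1) g h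
      = altVandermonde 1 (d + 1) (g - 1) h + (d + 1) * altVandermonde 1 d (g - 1) h := by
  induction d generalizing g h with
  | zero =>
    simp only [one_succ, zero]
    push_cast
    ring
  | succ d ih =>
    rw [one_succ (d + 1) g h, one_succ (d + 1) (g - 1) h]
    push_cast
    linear_combination (g - 1) * ih (g - 1) h - h * ih g (h - 1) - (d + 1) * one_succ d (g - 1) h

lemma one_succ_eq_sub_one_right (d : ℕ) (g h : R) :
    altVandermonde 1 (d + 1) g h
      = altVandermonde 1 (d + 1) g (h - 1) - (d + 1) * altVandermonde 1 d g (h - 1) := by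
  rw [swap 1 (d + 1) h g, one_succ_eq_sub_one_left, swap 1 (d + 1) g, swap 1 d g]
  linear_combination (altVandermonde 1 (d + 1) g (h - 1) - (d + 1) * altVandermonde 1 d g (h - 1))
    * (Even.neg_one_pow ⟨d, rfl⟩ : (-1 : R) ^ (d + d) = 1)

lemma add_sub_mul_one (d : ℕ) (g h : R) :
    (g + h - d) * altVandermonde 1 d g h
      = g * altVandermonde 1 d (g - 1) h + h * altVandermonde 1 d g (h - 1) := by
  cases d with
  | zero => simp
  | succ d =>
    push_cast
    linear_combination g * one_succ_eq_sub_one_left d g h + h * one_succ_eq_sub_one_right d g h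
      - (d + 1) * one_succ d g h

lemma one_sub_one_right_add_sub_one_left (d : ℕ) (g h : R) :
    altVandermonde 1 d g (h - 1) + altVandermonde 1 d (g - 1) h
      = 2 * altVandermonde 1 d (g - 1) (h - 1) := by
  cases d with
  | zero => simp [one_add_one_eq_two]
  | succ d =>
    linear_combination one_succ_eq_sub_one_left d g (h - 1)
      + one_succ_eq_sub_one_right d (g - 1) h

lemma add_sub_mul_one_succ (d : ℕ) (g h : R) :
    (g + h - d - 1) * altVandermonde 1 (d + 1) g h
      = g * (g - 1) * altVandermonde 1 d (g - 2) h
        - h * (h - 1) * altVandermonde 1 d g (h - 2) := by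
  have left := add_sub_mul_one d (g - 1) h
  have right := add_sub_mul_one d g (h - 1)
  rw [sub_sub, one_add_one_eq_two] at left right
  linear_combination (g + h - d - 1) * one_succ d g h + g * left - h * right

lemma one_succ_eq_shift_left (d : ℕ) (g h : R) :
    altVandermonde 1 (d + 1) g h
      = -(g + h - 2 * d - 2) * altVandermonde 1 d (g - 1) h
        + 2 * (g - 1) * altVandermonde 1 d (g - 2) h := by
  have left := add_sub_mul_one d (g - 1) h
  rw [sub_sub g, one_add_one_eq_two] at left
  linear_combination one_succ d g h + 2 * left - h * one_sub_one_right_add_sub_one_left d g h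

theorem two_eq_ascPochhammer_mul_one (d : ℕ) (g h : R) :
    altVandermonde 2 d g h
      = (ascPochhammer R d).eval (g + h - 2 * d + 1) * altVandermonde 1 d g h := by
  induction d generalizing g h with
  | zero => simp
  | succ d ih =>
    have arg_left : g - 2 + h - 2 * d + 1 = g + h - 2 * (d + 1 : ℕ) + 1 := by push_cast; ring
    have arg_right : g + (h - 2) - 2 * d + 1 = g + h - 2 * (d + 1 : ℕ) + 1 := by push_cast; ring
    rw [two_succ, ih, ih, arg_left, arg_right, ascPochhammer_succ_eval]
    push_cast
    linear_combination
      -(ascPochhammer R d).eval (g + h - 2 * (d + 1) + 1) * add_sub_mul_one_succ d g h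

end altVandermonde

/-- The terminating hypergeometric sum `₃F₂(a, b, -d; e, f; 1)`. Its value is the intended one only
when `(e)_d` and `(f)_d` are nonzero, since vanishing denominators are read as `x / 0 = 0`. -/
noncomputable def threeFTwo {K : Type*} [Field K] (d : ℕ) (a b e f : K) : K :=
  ∑ k ∈ Finset.range (d + 1),
    ((ascPochhammer K k).eval a * (ascPochhammer K k).eval b * (ascPochhammer K k).eval (-(d : K)))
      / ((ascPochhammer K k).eval e * (ascPochhammer K k).eval f * (k.factorial : K))

theorem descPochhammer_mul_threeFTwo {K : Type*} [Field K] [CharZero K] (d : ℕ) (g h : K)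
    (hg : (descPochhammer K (2 * d)).eval g ≠ 0) :
    (descPochhammer K (2 * d)).eval g
        * threeFTwo d (-h / 2) ((1 - h) / 2) ((g + 1) / 2 - d) (g / 2 + 1 - d)
      = altVandermonde 2 d g h := by
  rw [threeFTwo, altVandermonde, Finset.mul_sum]
  refine Finset.sum_congr rfl fun k hk => ?_
  obtain ⟨j, rfl⟩ := Nat.exists_eq_add_of_le (Finset.mem_range_succ_iff.1 hk)
  rw [descPochhammer_two_mul_add_eval] at hg ⊢
  simp only [mul_ne_zero_iff] at hg
  obtain ⟨-, -, he, hf⟩ := hg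
  rw [Nat.add_sub_cancel_left, mul_div_mul_comm, ascPochhammer_neg_natCast_eval_div_factorial,
    descPochhammer_two_mul_eval k h]
  generalize (ascPochhammer K k).eval ((g + 1) / 2 - (k + j : ℕ)) = e at *
  generalize (ascPochhammer K k).eval (g / 2 + 1 - (k + j : ℕ)) = f at *
  field_simp

section Zgen

lemma analyticAt_Zgen (g m : ℝ) {z : ℝ} (hz : 0 < 1 + 4 * z) : AnalyticAt ℝ (Zgen g m) z := by
  refine ContDiffAt.analyticAt ?_
  have base : ContDiffAt ℝ ⊤ (fun z : ℝ => 1 + 4 * z) z := by fun_prop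
  have denom_pos : 0 < √(1 + 4 * z) + 1 := by positivity
  exact ((contDiffAt_const.div ((base.sqrt hz.ne').add contDiffAt_const) denom_pos.ne')
    |>.rpow_const_of_ne (div_pos two_pos denom_pos).ne').mul (base.rpow_const_of_ne hz.ne')

lemma hasDerivAt_Zgen (g m : ℝ) {z : ℝ} (hz : 0 < 1 + 4 * z) :
    HasDerivAt (Zgen g m)
      (-(2 * g - 2 - m) * Zgen (g - 1) (m - 3) z + 2 * (g - 1) * Zgen (g - 2) (m - 4) z) z := by
  have base : HasDerivAt (fun z : ℝ => 1 + 4 * z) 4 z := by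
    simpa using ((hasDerivAt_id z).const_mul 4).const_add 1
  have left_factor := ((hasDerivAt_const z (2 : ℝ)).div ((base.sqrt hz.ne').add_const 1)
    (by positivity)).rpow_const (p := 2 * g - 2 - m)
      (Or.inl (by simp only [Pi.div_apply]; positivity))
  have right_factor := base.rpow_const (p := (g - 1) / 2) (Or.inl hz.ne')
  refine (left_factor.mul right_factor).congr_deriv ?_
  simp only [Zgen, Pi.div_apply]
  rw [show 2 * (g - 1) - 2 - (m - 3) = (2 * g - 2 - m - 1) + 2 by ring,
    show 2 * (g - 2) - 2 - (m - 4) = 2 * g - 2 - m by ring,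
    show (g - 2 - 1) / 2 = (g - 1) / 2 - 1 by ring,
    show (g - 1) / 2 = (g - 1 - 1) / 2 + 1 / 2 by ring,
    Real.rpow_add hz _ (1 / 2), ← Real.sqrt_eq_rpow,
    Real.rpow_add (by positivity) _ 2, Real.rpow_two]
  field_simp
  ring

theorem iteratedDeriv_Zgen_zero (d : ℕ) (g m : ℝ) :
    iteratedDeriv d (Zgen g m) 0 = altVandermonde 1 d g (g - 2 - m + 2 * d) := by
  induction d generalizing g m with
  | zero =>
    simp [Zgen, one_add_one_eq_two]
  | succ d ih =>
    have deriv_eventuallyEq : deriv (Zgen g m) =ᶠ[nhds 0]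
        (fun z => -(2 * g - 2 - m) * Zgen (g - 1) (m - 3) z)
          + fun z => 2 * (g - 1) * Zgen (g - 2) (m - 4) z := by
      filter_upwards [lt_mem_nhds (show (-1 / 4 : ℝ) < 0 by norm_num)] with z hz
      exact (hasDerivAt_Zgen g m (by linarith)).deriv
    have smooth (g m : ℝ) : ContDiffAt ℝ d (Zgen g m) 0 :=
      (analyticAt_Zgen g m (by norm_num)).contDiffAt
    rw [iteratedDeriv_succ', deriv_eventuallyEq.iteratedDeriv_eq,
      iteratedDeriv_add (contDiffAt_const.mul (smooth _ _)) (contDiffAt_const.mul (smooth _ _)),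
      iteratedDeriv_const_mul _ (smooth _ _), iteratedDeriv_const_mul _ (smooth _ _), ih, ih,
      altVandermonde.one_succ_eq_shift_left]
    push_cast
    rw [show g - 1 - 2 - (m - 3) + 2 * (d : ℝ) = g - 2 - m + 2 * (d + 1) by ring,
      show g - 2 - 2 - (m - 4) + 2 * (d : ℝ) = g - 2 - m + 2 * (d + 1) by ring]
    ring

end Zgen

theorem taylor_coeff_Zgen_general (d : ℕ) (g m : ℝ)
    (hg : (descPochhammer ℝ (2 * d)).eval g ≠ 0)
    (hm : (ascPochhammer ℝ d).eval (2 * g - 1 - m) ≠ 0) :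
    AnalyticAt ℝ (Zgen g m) 0 ∧
    iteratedDeriv d (Zgen g m) 0 / (d.factorial : ℝ) =
      (descPochhammer ℝ (2 * d)).eval g
          / ((d.factorial : ℝ) * (ascPochhammer ℝ d).eval (2 * g - 1 - m))
        * threeFTwo d (-g / 2 + m / 2 + 1 - d) (-g / 2 + (m + 3) / 2 - d)
            ((g + 1) / 2 - d) (g / 2 + 1 - d) := by
  refine ⟨analyticAt_Zgen g m (by norm_num), ?_⟩
  have hypergeometric := descPochhammer_mul_threeFTwo d g (g - 2 - m + 2 * d) hg
  rw [altVandermonde.two_eq_ascPochhammer_mul_one, ← iteratedDeriv_Zgen_zero,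
    show g + (g - 2 - m + 2 * d) - 2 * d + 1 = 2 * g - 1 - m by ring,
    show -(g - 2 - m + 2 * d) / 2 = -g / 2 + m / 2 + 1 - d by ring,
    show (1 - (g - 2 - m + 2 * d)) / 2 = -g / 2 + (m + 3) / 2 - d by ring] at hypergeometric
  rw [div_mul_eq_mul_div, hypergeometric]
  field_simp

theorem taylor_coeff_Zgen (d g m : ℕ) (hg : 2 * d ≤ g) (hm : m + 2 ≤ 2 * g) :
    AnalyticAt ℝ (Zgen g m) 0 ∧
    iteratedDeriv d (Zgen g m) 0 / (d.factorial : ℝ) =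
      ((g.factorial : ℝ) * ((2 * g - 2 - m).factorial : ℝ))
          / (((g - 2 * d).factorial : ℝ) * (d.factorial : ℝ)
              * ((2 * g - 2 - m + d).factorial : ℝ))
        * ∑ k ∈ Finset.range (d + 1),
            ((ascPochhammer ℝ k).eval (-(g : ℝ) / 2 + (m : ℝ) / 2 + 1 - d)
                * (ascPochhammer ℝ k).eval (-(g : ℝ) / 2 + ((m : ℝ) + 3) / 2 - d)
                * (ascPochhammer ℝ k).eval (-(d : ℝ)))
              / ((ascPochhammer ℝ k).eval (((g : ℝ) + 1) / 2 - d)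
                  * (ascPochhammer ℝ k).eval ((g : ℝ) / 2 + 1 - d)
                  * (k.factorial : ℝ)) := by
  have hg_eval := descPochhammer_natCast_eval_eq_div (K := ℝ) hg
  have hm_eval := ascPochhammer_natCast_add_one_eval_eq_div (K := ℝ) (2 * g - 2 - m) d
  have hm_cast : ((2 * g - 2 - m : ℕ) : ℝ) + 1 = 2 * g - 1 - m := by
    rw [Nat.sub_sub, Nat.cast_sub (by omega)]
    push_cast
    ring
  rw [hm_cast] at hm_eval
  have general := taylor_coeff_Zgen_general d g m (by rw [hg_eval]; positivity)
    (by rw [hm_eval]; positivity)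
  rw [hg_eval, hm_eval, threeFTwo] at general
  refine ⟨general.1, general.2.trans ?_⟩
  congr 1
  field_simp
end

section
/- Let d ≥ 3 be an integer. For a subgraph G of the complete graph on the vertex set {1,…,d} and for 2 ≤ j ≤ d, let indeg(G,j) = #{ i < j : {i,j} is an edge of G }, and set w_G = ∏_{j=2}^{d} (indeg(G,j))!. Then, summing over all connected spanning subgraphs G of the complete graph on {1,…,d} having exactly d edges: Σ_G w_G = ( Σ_{i=0}^{d−3} C(2d−1, i) ) · (d−1)!. -/
/-- `indeg(G,j) = #{i < j : {i,j} is an edge of G}`, the indegree of vertex `j`. -/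
noncomputable def indeg {d : ℕ} (G : SimpleGraph (Fin d)) (j : Fin d) : ℕ :=
  {i : Fin d | i < j ∧ G.Adj i j}.ncard

/-- The weight `w_G = ∏_j (indeg(G,j))!` of a subgraph of the complete graph. -/
noncomputable def graphWeight {d : ℕ} (G : SimpleGraph (Fin d)) : ℕ :=
  ∏ j : Fin d, (indeg G j).factorial

/-!
Let `M` be the greatest vertex. Deleting one of the `indeg G M` edges of `G` at `M` divides the
weight by `indeg G M`, so summing over these edges and dropping the factor counts `G` once. What
remains after the deletion is either still connected, with one independent cycle less, or splits
into two connected pieces, one of which avoids `M`. On the generating polynomials by number of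
independent cycles this is a recurrence whose second alternative is a binomial convolution over the
vertex set of the piece avoiding `M`. Its coefficient for trees is the Catalan recurrence, so the
weighted tree count on `n + 1` vertices is `n! C_n`. The coefficient for one cycle becomes a linear
equation for a power series over the Catalan series `c`, whose solution `(c - 1) ^ 2 / (1 - 4 X)`
has the partial binomial sums as coefficients.
-/

namespace UnicyclicCount

open Finset SimpleGraph

section ConnectedOn

variable {V : Type*}

/-- Connectedness of a graph whose vertex set is a part `S` of `V`. Such a graph is encoded as a
graph on all of `V` in which the vertices outside `S` are isolated, so that graphs on different
vertex sets can be compared and united. -/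
structure IsConnectedOn (G : SimpleGraph V) (S : Set V) : Prop where
  support_subset : G.support ⊆ S
  reachable : ∀ u ∈ S, ∀ v ∈ S, G.Reachable u v

lemma isConnectedOn_univ_iff [Nonempty V] {G : SimpleGraph V} :
    IsConnectedOn G Set.univ ↔ G.Connected :=
  ⟨fun h => ⟨fun u v => h.reachable u trivial v trivial⟩,
    fun h => ⟨Set.subset_univ _, fun u _ v _ => h.preconnected u v⟩⟩

lemma spanningCoe_induce_adj {G : SimpleGraph V} {S : Set V} {u v : V} :
    (G.induce S).spanningCoe.Adj u v ↔ G.Adj u v ∧ u ∈ S ∧ v ∈ S := by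
  simp

lemma spanningCoe_induce_sup {G H : SimpleGraph V} {S : Set V} (hG : G.support ⊆ S)
    (hH : Disjoint H.support S) : ((G ⊔ H).induce S).spanningCoe = G := by
  ext u v
  rw [spanningCoe_induce_adj, sup_adj]
  refine ⟨fun ⟨h, hu, _⟩ => h.resolve_right fun h => hH.ne_of_mem ⟨v, h⟩ hu rfl,
    fun h => ⟨.inl h, hG ⟨v, h⟩, hG ⟨u, h.symm⟩⟩⟩

lemma isConnectedOn_supp {G : SimpleGraph V} (C : G.ConnectedComponent) :
    IsConnectedOn (G.induce C.supp).spanningCoe C.supp where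
  support_subset _ := fun ⟨_, h⟩ => (spanningCoe_induce_adj.1 h).2.1
  reachable _u hu _v hv :=
    (C.reachable_toSimpleGraph hu hv).map (Embedding.spanningCoe (G.induce C.supp)).toHom

lemma sup_spanningCoe_induce_supp {G : SimpleGraph V} {C D : G.ConnectedComponent}
    (h : G.support ⊆ C.supp ∪ D.supp) :
    (G.induce C.supp).spanningCoe ⊔ (G.induce D.supp).spanningCoe = G := by
  ext u v
  simp only [sup_adj, spanningCoe_induce_adj, ← and_or_left, and_iff_left_iff_imp]
  intro hadj
  exact (h ⟨v, hadj⟩).imp (fun hu => ⟨hu, (C.mem_supp_congr_adj hadj).1 hu⟩)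
    fun hu => ⟨hu, (D.mem_supp_congr_adj hadj).1 hu⟩

lemma ncard_edgeSet_sdiff_edge_add_one [Finite V] {G : SimpleGraph V} {u v : V} (h : G.Adj u v) :
    (G \ edge u v).edgeSet.ncard + 1 = G.edgeSet.ncard := by
  rw [edgeSet_sdiff, edgeSet_edge_of_ne h.ne, Set.ncard_sdiff_singleton_add_one (by simpa)]

lemma ncard_edgeSet_sup [Finite V] {G H : SimpleGraph V} (h : Disjoint G.support H.support) :
    (G ⊔ H).edgeSet.ncard = G.edgeSet.ncard + H.edgeSet.ncard := by
  rw [edgeSet_sup, Set.ncard_union_eq]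
  rw [disjoint_edgeSet, SimpleGraph.disjoint_left]
  exact fun u v hG hH => h.ne_of_mem ⟨v, hG⟩ ⟨v, hH⟩ rfl

lemma reachable_or_reachable_of_sup_edge {G : SimpleGraph V} {u v w : V}
    (h : (G ⊔ edge u v).Reachable u w) : G.Reachable u w ∨ G.Reachable v w := by
  rw [reachable_iff_reflTransGen] at h
  induction h with
  | refl => exact .inl .rfl
  | tail _ hadj ih =>
    rcases hadj with hadj | hadj
    · exact ih.imp (·.trans hadj.reachable) (·.trans hadj.reachable)
    · obtain ⟨⟨-, rfl⟩ | ⟨-, rfl⟩, -⟩ := (edge_adj ..).1 hadj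
      exacts [.inr .rfl, .inl .rfl]

namespace IsConnectedOn

variable {G H : SimpleGraph V} {S T : Set V} {u v : V}

lemma supp_connectedComponentMk_sup (hG : IsConnectedOn G S) (hH : Disjoint H.support S)
    (hv : v ∈ S) : ((G ⊔ H).connectedComponentMk v).supp = S := by
  ext w
  rw [ConnectedComponent.mem_supp_iff, ConnectedComponent.eq, reachable_comm]
  refine ⟨fun h => ?_, fun hw => (hG.reachable v hv w hw).mono le_sup_left⟩
  rw [reachable_iff_reflTransGen] at h
  induction h with
  | refl => exact hv
  | tail _ hadj ih =>
    rcases hadj with hadj | hadj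
    · exact hG.support_subset ⟨_, hadj.symm⟩
    · exact absurd rfl (hH.ne_of_mem ⟨_, hadj⟩ ih)

lemma supp_connectedComponentMk (hG : IsConnectedOn G S) (hv : v ∈ S) :
    (G.connectedComponentMk v).supp = S := by
  have h := hG.supp_connectedComponentMk_sup (H := ⊥) (by simp) hv
  rwa [sup_bot_eq] at h

lemma ncard_le [Finite V] (hG : IsConnectedOn G S) : S.ncard ≤ G.edgeSet.ncard + 1 := by
  rcases S.eq_empty_or_nonempty with rfl | ⟨v, hv⟩
  · simp
  have h : (G.induce S).Connected :=
    hG.supp_connectedComponentMk hv ▸ (G.connectedComponentMk v).connected_toSimpleGraph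
  calc S.ncard ≤ Nat.card (G.induce S).edgeSet + 1 := h.card_vert_le_card_edgeSet_add_one
    _ ≤ G.edgeSet.ncard + 1 := by
      gcongr
      exact Nat.card_le_card_of_injective _ (Embedding.induce S).mapEdgeSet.injective

lemma neighborFinset_eq_filter [Fintype V] [DecidableEq V] [DecidableRel G.Adj] {S : Finset V}
    (hG : IsConnectedOn G S) (v : V) : G.neighborFinset v = {u ∈ S.erase v | G.Adj u v} := by
  ext u
  simp only [mem_neighborFinset, mem_filter, mem_erase, adj_comm _ v u]
  exact ⟨fun h => ⟨⟨h.ne, hG.support_subset ⟨v, h⟩⟩, h⟩, And.right⟩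

lemma exists_adj (hG : IsConnectedOn G S) (hu : u ∈ S) (hv : v ∈ S) (huv : u ≠ v) :
    ∃ w, G.Adj u w := by
  obtain ⟨_ | ⟨hadj, _⟩⟩ := hG.reachable u hu v hv
  exacts [absurd rfl huv, ⟨_, hadj⟩]

lemma sup_sup_edge (hG : IsConnectedOn G S) (hH : IsConnectedOn H T) (hu : u ∈ S) (hv : v ∈ T) :
    IsConnectedOn (G ⊔ H ⊔ edge u v) (S ∪ T) := by
  refine ⟨?_, ?_⟩
  · rintro a ⟨b, (h | h) | h⟩
    · exact .inl (hG.support_subset ⟨b, h⟩)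
    · exact .inr (hH.support_subset ⟨b, h⟩)
    · obtain ⟨⟨rfl, -⟩ | ⟨rfl, -⟩, -⟩ := (edge_adj ..).1 h
      exacts [.inl hu, .inr hv]
  · have huv : (G ⊔ H ⊔ edge u v).Reachable v u := by
      rcases eq_or_ne v u with rfl | hne
      · exact .rfl
      · exact Adj.reachable (.inr ((edge_adj ..).2 (by grind)))
    have hreach (w) (hw : w ∈ S ∪ T) : (G ⊔ H ⊔ edge u v).Reachable w u := by
      rcases hw with hw | hw
      · exact (hG.reachable w hw u hu).mono (le_sup_left.trans le_sup_left)
      · exact ((hH.reachable w hw v hv).mono (le_sup_right.trans le_sup_left)).trans huv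
    exact fun a ha b hb => (hreach a ha).trans (hreach b hb).symm

lemma sup_edge (hG : IsConnectedOn G S) (hu : u ∈ S) (hv : v ∈ S) :
    IsConnectedOn (G ⊔ edge u v) S := by
  simpa using hG.sup_sup_edge hG hu hv

lemma supp_union_supp (hG : IsConnectedOn (G ⊔ edge u v) S) (hu : u ∈ S) (hv : v ∈ S) :
    (G.connectedComponentMk u).supp ∪ (G.connectedComponentMk v).supp = S := by
  refine Set.Subset.antisymm (Set.union_subset ?_ ?_) fun w hw => ?_
  · rw [← hG.supp_connectedComponentMk hu]
    exact fun w hw => ConnectedComponent.sound ((ConnectedComponent.exact hw).mono le_sup_left)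
  · rw [← hG.supp_connectedComponentMk hv]
    exact fun w hw => ConnectedComponent.sound ((ConnectedComponent.exact hw).mono le_sup_left)
  · exact (reachable_or_reachable_of_sup_edge (hG.reachable u hu w hw)).imp
      (fun h => ConnectedComponent.sound h.symm) fun h => ConnectedComponent.sound h.symm

lemma of_sup_edge (hG : IsConnectedOn (G ⊔ edge u v) S) (hu : u ∈ S) (huv : G.Reachable u v) :
    IsConnectedOn G S where
  support_subset := (support_mono le_sup_left).trans hG.support_subset
  reachable a ha b hb := by
    have hreach (w) (hw : w ∈ S) : G.Reachable u w :=
      (reachable_or_reachable_of_sup_edge (hG.reachable u hu w hw)).elim id huv.trans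
    exact (hreach a ha).symm.trans (hreach b hb)

lemma exists_sup_eq (hG : IsConnectedOn (G ⊔ edge u v) S) (hu : u ∈ S) (hv : v ∈ S)
    (hG' : ¬ IsConnectedOn G S) :
    ∃ A ⊆ S \ {v}, u ∈ A ∧
      ∃ G₁ G₂, IsConnectedOn G₁ A ∧ IsConnectedOn G₂ (S \ A) ∧ G₁ ⊔ G₂ = G := by
  set C := G.connectedComponentMk u
  set D := G.connectedComponentMk v
  have hne : C ≠ D := fun h => hG' (hG.of_sup_edge hu (ConnectedComponent.exact h))
  have hunion : C.supp ∪ D.supp = S := hG.supp_union_supp hu hv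
  have hdisj : Disjoint C.supp D.supp := G.pairwise_disjoint_supp_connectedComponent hne
  have hsdiff : S \ C.supp = D.supp := hunion ▸ hdisj.sup_sdiff_cancel_left
  refine ⟨C.supp, fun w hw => ⟨hunion ▸ .inl hw, ?_⟩, rfl, (G.induce C.supp).spanningCoe,
    (G.induce D.supp).spanningCoe, isConnectedOn_supp C, hsdiff ▸ isConnectedOn_supp D,
    sup_spanningCoe_induce_supp ?_⟩
  · exact hdisj.ne_of_mem hw rfl
  · rw [hunion]
    exact (support_mono le_sup_left).trans hG.support_subset

lemma eq_of_sup_eq_sup {A A' : Set V} {G' H' : SimpleGraph V} (hG : IsConnectedOn G A)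
    (hH : IsConnectedOn H (S \ A)) (hG' : IsConnectedOn G' A') (hH' : IsConnectedOn H' (S \ A'))
    (hv : v ∈ A) (hv' : v ∈ A') (h : G ⊔ H = G' ⊔ H') : A = A' ∧ G = G' ∧ H = H' := by
  have hHA : Disjoint H.support A := disjoint_sdiff_self_left.mono_left hH.support_subset
  have hHA' : Disjoint H'.support A' := disjoint_sdiff_self_left.mono_left hH'.support_subset
  have hGA : Disjoint G.support (S \ A) := disjoint_sdiff_self_right.mono_left hG.support_subset
  have hGA' : Disjoint G'.support (S \ A') := disjoint_sdiff_self_right.mono_left hG'.support_subset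
  have hA : A = A' := by
    rw [← hG.supp_connectedComponentMk_sup hHA hv, h, hG'.supp_connectedComponentMk_sup hHA' hv']
  subst hA
  refine ⟨rfl, ?_, ?_⟩
  · rw [← spanningCoe_induce_sup hG.support_subset hHA, h,
      spanningCoe_induce_sup hG'.support_subset hHA']
  · rw [← spanningCoe_induce_sup hH.support_subset hGA, sup_comm, h, sup_comm,
      spanningCoe_induce_sup hH'.support_subset hGA']

end IsConnectedOn

end ConnectedOn

section ConnectedGraphs

variable {V R : Type*} [Fintype V] {S : Finset V} {G : SimpleGraph V}

open Classical in
/-- The connected graphs with vertex set `S`, encoded as graphs on `V`. -/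
noncomputable def connectedGraphs (S : Finset V) : Finset (SimpleGraph V) :=
  {G | IsConnectedOn G S}

@[simp]
lemma mem_connectedGraphs : G ∈ connectedGraphs S ↔ IsConnectedOn G S := by
  simp [connectedGraphs]

variable [AddCommMonoid R] {u v : V}

open Classical in
lemma sum_connectedGraphs_sdiff_edge (huv : u ≠ v) (F : SimpleGraph V → R) :
    ∑ G ∈ connectedGraphs S with G.Adj u v, F (G \ edge u v) =
      ∑ H with IsConnectedOn (H ⊔ edge u v) S ∧ ¬ H.Adj u v, F H := by
  have hedge : (edge u v).Adj u v := (edge_adj ..).2 ⟨.inl ⟨rfl, rfl⟩, huv⟩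
  refine sum_bij' (fun G _ => G \ edge u v) (fun H _ => H ⊔ edge u v) ?_ ?_ ?_ ?_ fun _ _ => rfl
  · intro G hG
    obtain ⟨hG, hadj⟩ := mem_filter.1 hG
    have hle : edge u v ≤ G := (edge_le_iff _).2 (.inr hadj)
    simp only [mem_filter, mem_univ, true_and, sdiff_sup_cancel hle]
    exact ⟨mem_connectedGraphs.1 hG, fun h => h.2 hedge⟩
  · intro H hH
    simp only [mem_filter, mem_univ, true_and, mem_connectedGraphs] at hH ⊢
    exact ⟨hH.1, .inr hedge⟩
  · exact fun G hG => sdiff_sup_cancel ((edge_le_iff _).2 (.inr (mem_filter.1 hG).2))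
  · exact fun H hH => Disjoint.sup_sdiff_cancel_right ((disjoint_edge _).2 (mem_filter.1 hH).2.2)

variable [DecidableEq V]

open Classical in
lemma sum_not_isConnectedOn_sup_edge (hu : u ∈ S) (hv : v ∈ S) (F : SimpleGraph V → R) :
    ∑ H with IsConnectedOn (H ⊔ edge u v) S ∧ ¬ IsConnectedOn H S, F H =
      ∑ A ∈ (S.erase v).powerset with u ∈ A,
        ∑ G ∈ connectedGraphs A, ∑ H ∈ connectedGraphs (S \ A), F (G ⊔ H) := by
  simp_rw [← sum_product', sum_sigma']
  symm
  refine sum_nbij (fun p => p.2.1 ⊔ p.2.2) ?_ ?_ ?_ fun _ _ => rfl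
  · rintro ⟨A, G, H⟩ hp
    simp only [mem_sigma, mem_filter, mem_powerset, mem_product, mem_connectedGraphs,
      coe_sdiff] at hp
    obtain ⟨⟨hAS, huA⟩, hG, hH⟩ := hp
    have hvA : v ∉ A := fun h => notMem_erase v S (hAS h)
    have hHA : Disjoint H.support A := disjoint_sdiff_self_left.mono_left hH.support_subset
    have hunion : (A ∪ (S \ A) : Set V) = S :=
      Set.union_sdiff_cancel (coe_subset.2 (hAS.trans (erase_subset v S)))
    refine mem_filter.2 ⟨mem_univ _, hunion ▸ hG.sup_sup_edge hH huA ⟨hv, hvA⟩, fun h => hvA ?_⟩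
    rw [← mem_coe, ← hG.supp_connectedComponentMk_sup hHA huA, h.supp_connectedComponentMk hu]
    exact hv
  · rintro ⟨A, G, H⟩ hp ⟨A', G', H'⟩ hp' (heq : G ⊔ H = G' ⊔ H')
    simp only [coe_sigma, Set.mem_sigma_iff, mem_coe, mem_filter, mem_product,
      mem_connectedGraphs, coe_sdiff] at hp hp'
    obtain ⟨hA, rfl, rfl⟩ := hp.2.1.eq_of_sup_eq_sup hp.2.2 hp'.2.1 hp'.2.2 hp.1.2 hp'.1.2 heq
    rw [coe_inj.1 hA]
  · intro H hH
    obtain ⟨hH, hH'⟩ := (mem_filter.1 hH).2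
    obtain ⟨A, hAS, huA, G₁, G₂, h₁, h₂, rfl⟩ := hH.exists_sup_eq hu hv hH'
    lift A to Finset V using A.toFinite
    rw [← coe_singleton, ← coe_sdiff, coe_subset, sdiff_singleton_eq_erase] at hAS
    exact ⟨⟨A, G₁, G₂⟩, by simp [mem_coe.1 huA, hAS, h₁, h₂], rfl⟩

open Classical in
lemma sum_connectedGraphs_sdiff_edge_eq (hu : u ∈ S.erase v) (hv : v ∈ S) (F : SimpleGraph V → R) :
    ∑ G ∈ connectedGraphs S with G.Adj u v, F (G \ edge u v) =
      ∑ H ∈ connectedGraphs S with ¬ H.Adj u v, F H +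
        ∑ A ∈ (S.erase v).powerset with u ∈ A,
          ∑ G ∈ connectedGraphs A, ∑ H ∈ connectedGraphs (S \ A), F (G ⊔ H) := by
  rw [sum_connectedGraphs_sdiff_edge (ne_of_mem_erase hu),
    ← sum_not_isConnectedOn_sup_edge (mem_of_mem_erase hu) hv,
    ← sum_filter_add_sum_filter_not _ (IsConnectedOn · S), filter_filter, filter_filter]
  congr 2
  · ext H
    simp only [mem_filter, mem_univ, true_and, mem_connectedGraphs]
    exact ⟨fun ⟨⟨_, hadj⟩, hH⟩ => ⟨hH, hadj⟩,
      fun ⟨hH, hadj⟩ => ⟨⟨hH.sup_edge (mem_of_mem_erase hu) hv, hadj⟩, hH⟩⟩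
  · ext H
    simp only [mem_filter, mem_univ, true_and]
    refine ⟨fun ⟨⟨h, _⟩, hH⟩ => ⟨h, hH⟩, fun ⟨h, hH⟩ => ⟨⟨h, fun hadj => hH ?_⟩, hH⟩⟩
    rwa [sup_eq_left.2 ((edge_le_iff _).2 (.inr hadj))] at h

lemma sum_connectedGraphs_sum_neighborFinset [∀ G : SimpleGraph V, DecidableRel G.Adj] (hv : v ∈ S)
    (F : SimpleGraph V → R) :
    ∑ G ∈ connectedGraphs S, ∑ u ∈ G.neighborFinset v, F (G \ edge u v) =
      ∑ H ∈ connectedGraphs S, #(S.erase v \ H.neighborFinset v) • F H +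
        ∑ A ∈ (S.erase v).powerset, #A •
          ∑ G ∈ connectedGraphs A, ∑ H ∈ connectedGraphs (S \ A), F (G ⊔ H) := by
  have hN {G} (hG : G ∈ connectedGraphs S) : G.neighborFinset v = {u ∈ S.erase v | G.Adj u v} :=
    (mem_connectedGraphs.1 hG).neighborFinset_eq_filter v
  calc
    _ = ∑ G ∈ connectedGraphs S, ∑ u ∈ S.erase v with G.Adj u v, F (G \ edge u v) :=
      sum_congr rfl fun G hG => by rw [hN hG]
    _ = ∑ u ∈ S.erase v, ∑ G ∈ connectedGraphs S with G.Adj u v, F (G \ edge u v) := by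
      simp_rw [sum_filter]
      exact sum_comm
    _ = ∑ u ∈ S.erase v, (∑ H ∈ connectedGraphs S with ¬ H.Adj u v, F H +
        ∑ A ∈ (S.erase v).powerset with u ∈ A,
          ∑ G ∈ connectedGraphs A, ∑ H ∈ connectedGraphs (S \ A), F (G ⊔ H)) :=
      sum_congr rfl fun u hu => by convert sum_connectedGraphs_sdiff_edge_eq hu hv F
    _ = _ := by
      rw [sum_add_distrib]
      congr 1
      · simp_rw [sum_filter]
        rw [sum_comm]
        refine sum_congr rfl fun H hH => ?_
        rw [← sum_filter, hN hH, ← filter_not, sum_const]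
      · simp_rw [sum_filter]
        rw [sum_comm]
        refine sum_congr rfl fun A hA => ?_
        rw [← sum_filter, filter_mem_eq_inter, inter_eq_right.2 (mem_powerset.1 hA), sum_const]

end ConnectedGraphs

section Numbers

/-- The weighted number of unicyclic graphs on `n + 1` vertices, divided by `n!`. It vanishes for
`n ≤ 1`, in agreement with the truncated subtraction. -/
def unicyclicNumber (n : ℕ) : ℕ := ∑ i ∈ range (n - 1), (2 * n + 1).choose i

lemma catalan_succ_eq_choose_sub_choose (n : ℕ) :
    (catalan (n + 1) : ℤ) = (2 * n + 1).choose (n + 1) - (2 * n + 1).choose (n + 2) := by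
  have h₁ := succ_mul_catalan_eq_centralBinom (n + 1)
  have h₂ : (2 * n + 1).choose (n + 2) * (n + 2) = (2 * n + 1).choose (n + 1) * n := by
    simpa [two_mul, Nat.add_sub_add_right] using Nat.choose_succ_right_eq (2 * n + 1) (n + 1)
  have h₃ : (n + 1).centralBinom = 2 * (2 * n + 1).choose (n + 1) := by
    rw [Nat.centralBinom_eq_two_mul_choose, show 2 * (n + 1) = 2 * n + 1 + 1 by ring,
      Nat.choose_succ_succ, ← Nat.choose_symm_half]
    ring
  rw [h₃] at h₁
  refine mul_left_cancel₀ (a := (n + 2 : ℤ)) (by positivity) ?_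
  zify at h₁ h₂
  linear_combination h₁ + h₂

lemma catalan_succ_succ_sub_two_mul_catalan_succ (n : ℕ) :
    (catalan (n + 2) - 2 * catalan (n + 1) : ℤ) =
      (2 * n + 1).choose (n + 2) - (2 * n + 1).choose (n + 3) := by
  have hsymm : (2 * n + 1).choose n = (2 * n + 1).choose (n + 1) :=
    (Nat.choose_symm_half n).symm
  have hpascal (k : ℕ) : (2 * (n + 1) + 1).choose (k + 2) =
      (2 * n + 1).choose k + 2 * (2 * n + 1).choose (k + 1) + (2 * n + 1).choose (k + 2) := by
    rw [show 2 * (n + 1) + 1 = 2 * n + 1 + 1 + 1 by ring]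
    simp only [Nat.choose_succ_succ']
    ring
  rw [catalan_succ_eq_choose_sub_choose (n + 1), catalan_succ_eq_choose_sub_choose n, hpascal,
    hpascal, hsymm]
  push_cast
  ring

lemma sum_range_choose_succ (m k : ℕ) :
    ∑ i ∈ range (k + 1), (m + 1).choose i = 2 * ∑ i ∈ range k, m.choose i + m.choose k := by
  rw [sum_range_succ', sum_congr rfl fun i _ => Nat.choose_succ_succ m i, sum_add_distrib,
    Nat.choose_zero_right, ← Nat.choose_zero_right m, add_assoc,
    ← sum_range_succ' (fun i => m.choose i), sum_range_succ]
  ring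

lemma unicyclicNumber_succ (n : ℕ) :
    (unicyclicNumber (n + 1) : ℤ) =
      4 * unicyclicNumber n + catalan (n + 2) - 2 * catalan (n + 1) := by
  rw [add_sub_assoc, catalan_succ_succ_sub_two_mul_catalan_succ]
  rcases n with _ | _ | n
  · simp [unicyclicNumber, Nat.choose]
  · simp [unicyclicNumber, Nat.choose]
  have h₁ : (2 * n + 5).choose (n + 4) = (2 * n + 5).choose (n + 1) :=
    Nat.choose_symm_of_eq_add (by ring)
  have h₂ : (2 * n + 5).choose (n + 5) = (2 * n + 5).choose n :=
    Nat.choose_symm_of_eq_add (by ring)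
  have hsum : unicyclicNumber (n + 3) + (2 * n + 5).choose n =
      4 * unicyclicNumber (n + 2) + (2 * n + 5).choose (n + 1) := by
    change ∑ i ∈ range (n + 2), (2 * n + 7).choose i + _ =
      4 * ∑ i ∈ range (n + 1), (2 * n + 5).choose i + _
    rw [sum_range_choose_succ, sum_range_choose_succ, Nat.choose_succ_succ, sum_range_succ]
    ring
  rw [← h₁, ← h₂] at hsum
  zify at hsum
  linear_combination hsum

open PowerSeries

/-- The Catalan generating function with integer coefficients, which allow subtraction. -/
noncomputable def intCatalanSeries : ℤ⟦X⟧ := catalanSeries.map (Nat.castRingHom ℤ)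

lemma coeff_intCatalanSeries (n : ℕ) : coeff n intCatalanSeries = catalan n := by
  simp [intCatalanSeries]

lemma intCatalanSeries_eq : intCatalanSeries = 1 + X * intCatalanSeries ^ 2 := by
  have h := congrArg (PowerSeries.map (Nat.castRingHom ℤ)) catalanSeries_sq_mul_X_add_one
  simp only [map_add, map_mul, map_pow, map_one, map_X] at h
  rw [intCatalanSeries]
  linear_combination -h

lemma coeff_intCatalanSeries_sq (n : ℕ) :
    coeff n (intCatalanSeries ^ 2) = (catalan (n + 1) : ℤ) := by
  have h := congrArg (coeff (n + 1)) intCatalanSeries_eq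
  rw [map_add, coeff_succ_X_mul, coeff_intCatalanSeries, coeff_one, if_neg n.succ_ne_zero,
    zero_add] at h
  exact h.symm

/-- The generating function of the numbers `unicyclicNumber n`. -/
noncomputable def unicyclicSeries : ℤ⟦X⟧ := .mk fun n => unicyclicNumber n

lemma one_sub_four_X_mul_unicyclicSeries :
    (1 - 4 * X) * unicyclicSeries = (intCatalanSeries - 1) ^ 2 := by
  have hleft : (1 - 4 * X) * unicyclicSeries =
      unicyclicSeries - C (4 : ℤ) * (X * unicyclicSeries) := by
    rw [map_ofNat]
    ring
  have hright : (intCatalanSeries - 1) ^ 2 =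
      intCatalanSeries ^ 2 - C (2 : ℤ) * intCatalanSeries + 1 := by
    rw [map_ofNat]
    ring
  rw [hleft, hright]
  ext n
  rcases n with _ | n
  · simp only [map_sub, map_add, coeff_C_mul, coeff_zero_X_mul, coeff_intCatalanSeries,
      coeff_intCatalanSeries_sq, unicyclicSeries, coeff_mk, coeff_zero_one]
    simp [unicyclicNumber]
  · simp only [map_sub, map_add, coeff_C_mul, coeff_succ_X_mul, coeff_intCatalanSeries,
      coeff_intCatalanSeries_sq, unicyclicSeries, coeff_mk, coeff_one, unicyclicNumber_succ,
      n.succ_ne_zero, if_false]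
    ring

lemma derivative_intCatalanSeries :
    derivative ℤ intCatalanSeries =
      intCatalanSeries ^ 2 + 2 * X * intCatalanSeries * derivative ℤ intCatalanSeries := by
  conv_lhs => rw [intCatalanSeries_eq]
  rw [map_add, Derivation.map_one_eq_zero, Derivation.leibniz, Derivation.leibniz_pow,
    derivative_X]
  simp only [smul_eq_mul, nsmul_eq_mul]
  push_cast
  ring

lemma one_sub_two_X_mul_intCatalanSeries_sq :
    (1 - 2 * X * intCatalanSeries) ^ 2 = 1 - 4 * X := by
  linear_combination (-4 * X) * intCatalanSeries_eq

lemma unicyclicSeries_eq :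
    unicyclicSeries = X * derivative ℤ intCatalanSeries - intCatalanSeries ^ 2 + intCatalanSeries +
      2 * (X * (intCatalanSeries * unicyclicSeries)) := by
  have hne : 1 - 2 * X * intCatalanSeries ≠ 0 := fun h => by
    simpa using congrArg constantCoeff h
  refine mul_left_cancel₀ hne ?_
  linear_combination one_sub_four_X_mul_unicyclicSeries +
    unicyclicSeries * one_sub_two_X_mul_intCatalanSeries_sq - X * derivative_intCatalanSeries -
    (1 - 2 * intCatalanSeries) * intCatalanSeries_eq

lemma unicyclicNumber_succ_eq_sum (n : ℕ) :
    (unicyclicNumber (n + 1) : ℤ) = (n + 2) * catalan (n + 1) - catalan (n + 2) +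
      2 * ∑ p ∈ antidiagonal n, (catalan p.1 * unicyclicNumber p.2 : ℤ) := by
  have h := congrArg (coeff (n + 1)) unicyclicSeries_eq
  rw [← map_ofNat C 2, map_add, map_add, map_sub, coeff_succ_X_mul, coeff_derivative, coeff_C_mul,
    coeff_succ_X_mul, coeff_mul] at h
  simp only [coeff_intCatalanSeries, coeff_intCatalanSeries_sq, unicyclicSeries, coeff_mk] at h
  rw [h]
  ring

end Numbers

section Convolution

open scoped Nat
variable {α R : Type*} [DecidableEq α] [CommSemiring R]

lemma sum_powerset_erase_card_mul {S : Finset α} {M : α} {n : ℕ} (hS : #S = n + 2) (hM : M ∈ S)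
    {p q : Finset α → R} {f g : ℕ → R} (hp : ∀ A ⊂ S, ∀ a, #A = a + 1 → p A = a ! * f a)
    (hq : ∀ B ⊂ S, M ∈ B → ∀ b, #B = b + 1 → q B = b ! * g b) :
    ∑ A ∈ (S.erase M).powerset, #A * (p A * q (S \ A)) =
      (n + 1)! * ∑ ab ∈ antidiagonal n, f ab.1 * g ab.2 := by
  have hcard : #(S.erase M) = n + 1 := by
    rw [card_erase_of_mem hM, hS]
    rfl
  have hterm : ∀ A ∈ (S.erase M).powerset, (#A * (p A * q (S \ A)) : R) =
      (#A * ((#A - 1)! * f (#A - 1) * ((n + 1 - #A)! * g (n + 1 - #A)))) := by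
    intro A hA
    have hAS := mem_powerset.1 hA
    rcases A.eq_empty_or_nonempty with rfl | hne
    · simp
    have hMA : M ∉ A := fun h => notMem_erase M S (hAS h)
    have hle : #A ≤ n + 1 := hcard ▸ card_le_card hAS
    have hpos : 0 < #A := hne.card_pos
    have hsub : A ⊂ S := hAS.trans_ssubset (erase_ssubset hM)
    rw [hp A hsub (#A - 1) (by lia), hq (S \ A) (sdiff_ssubset hsub.subset hne)
      (mem_sdiff.2 ⟨hM, hMA⟩) (n + 1 - #A) (by rw [card_sdiff_of_subset hsub.subset]; lia)]
  rw [sum_congr rfl hterm, sum_powerset_apply_card fun k =>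
    (k * ((k - 1)! * f (k - 1) * ((n + 1 - k)! * g (n + 1 - k))) : R), hcard,
    sum_range_succ', Nat.sum_antidiagonal_eq_sum_range_succ_mk, mul_sum]
  simp only [Nat.cast_zero, zero_mul, smul_zero, add_zero]
  refine sum_congr rfl fun a ha => ?_
  have hchoose := Nat.choose_mul_factorial_mul_factorial (n := n + 1) (k := a + 1)
    (by simpa [Nat.lt_succ_iff] using ha)
  rw [Nat.add_sub_add_right, Nat.factorial_succ a] at hchoose
  rw [← hchoose, nsmul_eq_mul]
  simp only [Nat.add_sub_add_right]
  push_cast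
  ring

end Convolution

section Weights

variable {d : ℕ} {G H : SimpleGraph (Fin d)} {S : Set (Fin d)} {M u j : Fin d}

open Classical in
lemma indeg_eq_card_neighborFinset (hG : G.support ⊆ S) (hM : M ∈ upperBounds S) :
    indeg G M = #(G.neighborFinset M) := by
  rw [indeg, ← Set.ncard_coe_finset]
  congr 1
  ext u
  simp only [Set.mem_ofPred_eq, coe_neighborFinset, mem_neighborSet, adj_comm G M]
  exact ⟨And.right, fun h => ⟨(hM (hG ⟨M, h⟩)).lt_of_ne h.ne, h⟩⟩

lemma indeg_sdiff_edge_add_one (hu : u < M) (h : G.Adj u M) :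
    indeg (G \ edge u M) M + 1 = indeg G M := by
  rw [indeg, indeg, ← Set.ncard_sdiff_singleton_add_one (a := u) (s := {i | i < M ∧ G.Adj i M})
    ⟨hu, h⟩]
  congr 2
  ext i
  simp only [Set.mem_ofPred_eq, Set.mem_sdiff, Set.mem_singleton_iff, sdiff_adj, edge_adj]
  grind

lemma indeg_sdiff_edge_of_ne (hu : u < M) (hj : j ≠ M) : indeg (G \ edge u M) j = indeg G j := by
  rw [indeg, indeg]
  congr 1
  ext i
  simp only [Set.mem_ofPred_eq, sdiff_adj, edge_adj]
  grind

lemma graphWeight_eq_indeg_mul (hu : u < M) (h : G.Adj u M) :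
    graphWeight G = indeg G M * graphWeight (G \ edge u M) := by
  rw [graphWeight, graphWeight, ← mul_prod_erase _ _ (mem_univ M),
    ← mul_prod_erase _ _ (mem_univ M), ← mul_assoc, ← indeg_sdiff_edge_add_one hu h,
    Nat.factorial_succ]
  congr 1
  exact prod_congr rfl fun j hj => by rw [indeg_sdiff_edge_of_ne hu (ne_of_mem_erase hj)]

lemma indeg_eq_zero_of_notMem_support (hj : j ∉ G.support) : indeg G j = 0 := by
  rw [indeg, Set.ncard_eq_zero]
  exact Set.eq_empty_of_forall_notMem fun i h => hj ⟨i, h.2.symm⟩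

lemma indeg_sup_of_notMem_support (hj : j ∉ G.support) : indeg (G ⊔ H) j = indeg H j := by
  have h (i) : ¬ G.Adj i j := fun h => hj ⟨i, h.symm⟩
  simp [indeg, h]

lemma graphWeight_sup (h : Disjoint G.support H.support) :
    graphWeight (G ⊔ H) = graphWeight G * graphWeight H := by
  rw [graphWeight, graphWeight, graphWeight, ← prod_mul_distrib]
  refine prod_congr rfl fun j _ => ?_
  by_cases hj : j ∈ G.support
  · have hj' : j ∉ H.support := fun hj' => h.ne_of_mem hj hj' rfl
    rw [sup_comm, indeg_sup_of_notMem_support hj', indeg_eq_zero_of_notMem_support hj',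
      Nat.factorial_zero, mul_one]
  · rw [indeg_sup_of_notMem_support hj, indeg_eq_zero_of_notMem_support hj,
      Nat.factorial_zero, one_mul]

lemma graphWeight_bot : graphWeight (⊥ : SimpleGraph (Fin d)) = 1 := by
  simp [graphWeight, indeg]

end Weights

section WeightPoly

open Polynomial
variable {d : ℕ} {S : Finset (Fin d)} {M : Fin d}

/-- The sum of `w_G φ(G) X ^ c(G)` over the connected graphs `G` with vertex set `S`, where `c(G)`
is the number of independent cycles. By `IsConnectedOn.ncard_le` the subtraction in the exponent
does not truncate. The test function `φ` is there because the recurrence `weightPoly_indeg` shifts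
functions of the indegree of the greatest vertex. -/
noncomputable def weightPoly (S : Finset (Fin d)) : (SimpleGraph (Fin d) → ℤ) →ₗ[ℤ] ℤ[X] where
  toFun φ := ∑ G ∈ connectedGraphs S, monomial (G.edgeSet.ncard + 1 - #S) (graphWeight G * φ G)
  map_add' φ ψ := by simp [mul_add, sum_add_distrib]
  map_smul' c φ := by simp [smul_sum, smul_monomial, mul_left_comm]

lemma weightPoly_apply (φ : SimpleGraph (Fin d) → ℤ) : weightPoly S φ =
    ∑ G ∈ connectedGraphs S, monomial (G.edgeSet.ncard + 1 - #S) (graphWeight G * φ G) :=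
  rfl

lemma weightPoly_singleton (φ : SimpleGraph (Fin d) → ℤ) : weightPoly {M} φ = C (φ ⊥) := by
  have hgraphs : connectedGraphs {M} = {(⊥ : SimpleGraph (Fin d))} := by
    ext G
    rw [mem_connectedGraphs, coe_singleton, mem_singleton]
    refine ⟨fun hG => ?_, fun hG => ?_⟩
    · refine eq_bot_iff_forall_not_adj.2 fun u v hadj => hadj.ne ?_
      exact (hG.support_subset ⟨v, hadj⟩).trans (hG.support_subset ⟨u, hadj.symm⟩).symm
    · subst hG
      exact ⟨by simp, by simp⟩
  simp [weightPoly_apply, hgraphs, graphWeight_bot]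

lemma graphWeight_mul_eq_sum [∀ G : SimpleGraph (Fin d), DecidableRel G.Adj]
    {G : SimpleGraph (Fin d)} (hG : IsConnectedOn G S) (hM : IsGreatest (S : Set (Fin d)) M)
    (hS : 1 < #S) (g : ℕ → ℤ) :
    graphWeight G * g (indeg G M) =
      ∑ u ∈ G.neighborFinset M, graphWeight (G \ edge u M) * g (indeg (G \ edge u M) M + 1) := by
  have hcard : indeg G M = #(G.neighborFinset M) := by
    convert indeg_eq_card_neighborFinset hG.support_subset hM.2
  have hne : (indeg G M : ℤ) ≠ 0 := by
    obtain ⟨v, hv, hvM⟩ := exists_mem_ne hS M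
    obtain ⟨u, hu⟩ := hG.exists_adj hM.1 hv hvM.symm
    rw [hcard, Nat.cast_ne_zero]
    exact card_ne_zero_of_mem ((G.mem_neighborFinset ..).2 hu)
  refine mul_left_cancel₀ hne ?_
  have hterm : ∀ u ∈ G.neighborFinset M, (indeg G M : ℤ) *
      (graphWeight (G \ edge u M) * g (indeg (G \ edge u M) M + 1)) =
        graphWeight G * g (indeg G M) := by
    intro u hu
    have hadj : G.Adj u M := ((G.mem_neighborFinset ..).1 hu).symm
    have hlt : u < M := (hM.2 (hG.support_subset ⟨M, hadj⟩)).lt_of_ne hadj.ne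
    rw [indeg_sdiff_edge_add_one hlt hadj, graphWeight_eq_indeg_mul hlt hadj]
    push_cast
    ring
  rw [mul_sum, sum_congr rfl hterm, sum_const, ← hcard, nsmul_eq_mul]

lemma monomial_graphWeight_sup {A : Finset (Fin d)} {G H : SimpleGraph (Fin d)}
    (hA : A ⊆ S.erase M) (hG : IsConnectedOn G A) (hH : IsConnectedOn H ↑(S \ A)) (g : ℕ → ℤ) :
    monomial ((G ⊔ H).edgeSet.ncard + 2 - #S) (graphWeight (G ⊔ H) * g (indeg (G ⊔ H) M) : ℤ) =
      monomial (G.edgeSet.ncard + 1 - #A) (graphWeight G : ℤ) *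
        monomial (H.edgeSet.ncard + 1 - #(S \ A)) (graphWeight H * g (indeg H M) : ℤ) := by
  have hMA : M ∉ A := fun h => notMem_erase M S (hA h)
  have hAS : A ⊆ S := hA.trans (erase_subset M S)
  have hdisj : Disjoint G.support H.support :=
    (disjoint_coe.2 disjoint_sdiff).mono hG.support_subset hH.support_subset
  have hle₁ := hG.ncard_le
  have hle₂ := hH.ncard_le
  rw [Set.ncard_coe_finset] at hle₁ hle₂
  have hexp : (G ⊔ H).edgeSet.ncard + 2 - #S =
      G.edgeSet.ncard + 1 - #A + (H.edgeSet.ncard + 1 - #(S \ A)) := by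
    rw [ncard_edgeSet_sup hdisj]
    have := card_sdiff_add_card_eq_card hAS
    lia
  rw [monomial_mul_monomial, hexp, graphWeight_sup hdisj,
    indeg_sup_of_notMem_support fun h => hMA (hG.support_subset h)]
  push_cast
  rw [mul_assoc]

open Classical in
lemma card_erase_sdiff_neighborFinset {H : SimpleGraph (Fin d)} (hH : IsConnectedOn H S)
    (hM : IsGreatest (S : Set (Fin d)) M) :
    (#(S.erase M \ H.neighborFinset M) : ℤ) = #S - 1 - indeg H M := by
  have hsub : H.neighborFinset M ⊆ S.erase M := hH.neighborFinset_eq_filter M ▸ filter_subset ..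
  rw [cast_card_sdiff hsub, cast_card_erase_of_mem hM.1,
    indeg_eq_card_neighborFinset hH.support_subset hM.2]

lemma weightPoly_indeg (hM : IsGreatest (S : Set (Fin d)) M) (hS : 1 < #S) (g : ℕ → ℤ) :
    weightPoly S (fun G => g (indeg G M)) =
      X * weightPoly S (fun G => (#S - 1 - indeg G M) * g (indeg G M + 1)) +
        ∑ A ∈ (S.erase M).powerset, #A *
          (weightPoly A 1 * weightPoly (S \ A) fun G => g (indeg G M + 1)) := by
  classical
  let F (H : SimpleGraph (Fin d)) : ℤ[X] :=
    monomial (H.edgeSet.ncard + 2 - #S) (graphWeight H * g (indeg H M + 1))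
  calc weightPoly S (fun G => g (indeg G M))
      = ∑ G ∈ connectedGraphs S, ∑ u ∈ G.neighborFinset M, F (G \ edge u M) := by
        refine sum_congr rfl fun G hG => ?_
        rw [graphWeight_mul_eq_sum (mem_connectedGraphs.1 hG) hM hS, map_sum]
        refine sum_congr rfl fun u hu => ?_
        rw [← ncard_edgeSet_sdiff_edge_add_one ((G.mem_neighborFinset ..).1 hu).symm]
    _ = ∑ H ∈ connectedGraphs S, #(S.erase M \ H.neighborFinset M) • F H +
        ∑ A ∈ (S.erase M).powerset, #A •
          ∑ G ∈ connectedGraphs A, ∑ H ∈ connectedGraphs (S \ A), F (G ⊔ H) :=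
      sum_connectedGraphs_sum_neighborFinset hM.1 F
    _ = _ := ?_
  congr 1
  · rw [weightPoly_apply, mul_sum]
    refine sum_congr rfl fun H hH => ?_
    rw [mem_connectedGraphs] at hH
    have hle := hH.ncard_le
    rw [Set.ncard_coe_finset] at hle
    rw [X_mul_monomial, ← Nat.cast_smul_eq_nsmul ℤ, card_erase_sdiff_neighborFinset hH hM,
      smul_monomial, smul_eq_mul, mul_left_comm,
      show H.edgeSet.ncard + 1 - #S + 1 = H.edgeSet.ncard + 2 - #S by lia]
  · refine sum_congr rfl fun A hA => ?_
    rw [weightPoly_apply, weightPoly_apply, sum_mul_sum, nsmul_eq_mul]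
    congr 1
    refine sum_congr rfl fun G hG => sum_congr rfl fun H hH => ?_
    simp only [Pi.one_apply, mul_one]
    exact monomial_graphWeight_sup (mem_powerset.1 hA) (mem_connectedGraphs.1 hG)
      (mem_connectedGraphs.1 hH) fun k => g (k + 1)

lemma coeff_one_weightPoly_univ (d : ℕ) [NeZero d] :
    (weightPoly (univ : Finset (Fin d)) 1).coeff 1 =
      ∑ᶠ G ∈ {G : SimpleGraph (Fin d) | G.Connected ∧ G.edgeSet.ncard = d}, graphWeight G := by
  classical
  have hset : {G : SimpleGraph (Fin d) | G.Connected ∧ G.edgeSet.ncard = d} =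
      ({G ∈ connectedGraphs univ | G.edgeSet.ncard = d} : Finset (SimpleGraph (Fin d))) := by
    ext G
    simp [isConnectedOn_univ_iff]
  rw [hset, finsum_mem_coe_finset, sum_filter, weightPoly_apply, finsetSum_coeff]
  push_cast
  refine sum_congr rfl fun G hG => ?_
  have hle := (mem_connectedGraphs.1 hG).ncard_le
  rw [Set.ncard_coe_finset, card_univ, Fintype.card_fin] at hle
  rw [coeff_monomial, Pi.one_apply, mul_one, card_univ, Fintype.card_fin]
  exact if_congr (by lia) rfl rfl

end WeightPoly

section Induction

open Polynomial
open scoped Nat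
variable {d : ℕ} {S : Finset (Fin d)} {M : Fin d} {n : ℕ}

lemma coeff_zero_weightPoly_indeg (hM : IsGreatest (S : Set (Fin d)) M) (hS : 1 < #S)
    (g : ℕ → ℤ) :
    (weightPoly S fun G => g (indeg G M)).coeff 0 =
      ∑ A ∈ (S.erase M).powerset, #A *
        ((weightPoly A 1).coeff 0 * (weightPoly (S \ A) fun G => g (indeg G M + 1)).coeff 0) := by
  rw [weightPoly_indeg hM hS, coeff_add, coeff_X_mul_zero, zero_add, finsetSum_coeff]
  exact sum_congr rfl fun A _ => by rw [coeff_natCast_mul, mul_coeff_zero]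

lemma coeff_one_weightPoly_one_eq (hM : IsGreatest (S : Set (Fin d)) M) (hS : 1 < #S) :
    (weightPoly S 1).coeff 1 =
      #S * (weightPoly S 1).coeff 0 - (weightPoly S fun G => indeg G M + 1).coeff 0 +
        ∑ A ∈ (S.erase M).powerset, #A *
          ((weightPoly A 1).coeff 0 * (weightPoly (S \ A) 1).coeff 1) +
        ∑ A ∈ (S.erase M).powerset, #A *
          ((weightPoly A 1).coeff 1 * (weightPoly (S \ A) 1).coeff 0) := by
  have hsub : (fun G : SimpleGraph (Fin d) => ((#S - 1 - indeg G M) * 1 : ℤ)) =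
      (#S : ℤ) • (1 : SimpleGraph (Fin d) → ℤ) - fun G => (indeg G M + 1 : ℤ) := by
    ext G
    simp only [Pi.sub_apply, Pi.smul_apply, Pi.one_apply, smul_eq_mul]
    ring
  have hrec : weightPoly S 1 = _ := weightPoly_indeg hM hS fun _ => 1
  conv_lhs => rw [hrec]
  rw [hsub, map_sub, map_smul, coeff_add, coeff_X_mul, coeff_sub, coeff_smul, smul_eq_mul,
    finsetSum_coeff, add_assoc, ← sum_add_distrib]
  congr 1
  refine sum_congr rfl fun A _ => ?_
  rw [coeff_natCast_mul, mul_coeff_one, mul_add]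
  rfl

lemma coeff_zero_weightPoly_one (hS : #S = n + 1) :
    (weightPoly S 1).coeff 0 = n ! * catalan n := by
  induction S using Finset.strongInduction generalizing n with
  | H S ih =>
    rcases n with _ | n
    · obtain ⟨M, rfl⟩ := card_eq_one.1 hS
      simp [weightPoly_singleton]
    have hM := S.isGreatest_max' (card_pos.1 (by lia))
    calc (weightPoly S 1).coeff 0 = _ := coeff_zero_weightPoly_indeg hM (by lia) fun _ => 1
      _ = (n + 1)! * ∑ p ∈ antidiagonal n, (catalan p.1 * catalan p.2 : ℤ) :=
        sum_powerset_erase_card_mul hS hM.1 (fun A hA _ ha => ih A hA ha)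
          fun B hB _ _ hb => ih B hB hb
      _ = (n + 1)! * catalan (n + 1) := by
        rw [catalan_succ']
        push_cast
        rfl

lemma coeff_zero_weightPoly_indeg_add_one (hM : IsGreatest (S : Set (Fin d)) M)
    (hS : #S = n + 1) :
    (weightPoly S fun G => indeg G M + 1).coeff 0 = n ! * catalan (n + 1) := by
  induction S using Finset.strongInduction generalizing n with
  | H S ih =>
    rcases n with _ | n
    · obtain ⟨M', rfl⟩ := card_eq_one.1 hS
      simp [weightPoly_singleton, indeg]
    have hsucc : ∀ B ⊂ S, M ∈ B → ∀ b, #B = b + 1 →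
        (weightPoly B fun G => (indeg G M + 1 : ℕ) + 1).coeff 0 =
          b ! * (catalan (b + 1) + catalan b : ℤ) := by
      intro B hB hMB b hb
      have hadd : (fun G : SimpleGraph (Fin d) => ((indeg G M + 1 : ℕ) + 1 : ℤ)) =
          (fun G => (indeg G M + 1 : ℤ)) + 1 := by
        ext G
        simp
      rw [hadd, map_add, coeff_add, ih B hB ⟨hMB, fun x hx => hM.2 (hB.subset hx)⟩ hb,
        coeff_zero_weightPoly_one hb, mul_add]
    have hcatalan : ∑ p ∈ antidiagonal n, catalan p.1 * (catalan (p.2 + 1) + catalan p.2) =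
        catalan (n + 2) := by
      simp only [mul_add, sum_add_distrib]
      rw [← catalan_succ', catalan_succ' (n + 1), Nat.sum_antidiagonal_succ', catalan_zero,
        mul_one, add_comm]
    calc (weightPoly S fun G => indeg G M + 1).coeff 0 = _ :=
        coeff_zero_weightPoly_indeg hM (by lia) fun k => k + 1
      _ = (n + 1)! * ∑ p ∈ antidiagonal n,
          (catalan p.1 * (catalan (p.2 + 1) + catalan p.2) : ℤ) :=
        sum_powerset_erase_card_mul hS hM.1 (fun _ _ _ ha => coeff_zero_weightPoly_one ha) hsucc
      _ = (n + 1)! * catalan (n + 2) := by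
        rw [← hcatalan]
        push_cast
        rfl

lemma coeff_one_weightPoly_one (hS : #S = n + 1) :
    (weightPoly S 1).coeff 1 = n ! * unicyclicNumber n := by
  induction S using Finset.strongInduction generalizing n with
  | H S ih =>
    rcases n with _ | n
    · obtain ⟨M, rfl⟩ := card_eq_one.1 hS
      simp [weightPoly_singleton, unicyclicNumber, coeff_one]
    have hM := S.isGreatest_max' (card_pos.1 (by lia))
    have hswap : ∑ p ∈ antidiagonal n, (unicyclicNumber p.1 * catalan p.2 : ℤ) =
        ∑ p ∈ antidiagonal n, (catalan p.1 * unicyclicNumber p.2 : ℤ) := by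
      rw [← Nat.sum_antidiagonal_swap]
      exact sum_congr rfl fun _ _ => mul_comm ..
    rw [coeff_one_weightPoly_one_eq hM (by lia), coeff_zero_weightPoly_one hS,
      coeff_zero_weightPoly_indeg_add_one hM hS,
      sum_powerset_erase_card_mul hS hM.1 (fun _ _ _ ha => coeff_zero_weightPoly_one ha)
        fun B hB _ _ hb => ih B hB hb,
      sum_powerset_erase_card_mul hS hM.1 (fun A hA _ ha => ih A hA ha)
        fun _ _ _ _ hb => coeff_zero_weightPoly_one hb,
      hswap, unicyclicNumber_succ_eq_sum, hS]
    push_cast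
    ring

end Induction

end UnicyclicCount

theorem weighted_unicyclic_count (d : ℕ) (hd : 3 ≤ d) :
    ∑ᶠ G ∈ {G : SimpleGraph (Fin d) | G.Connected ∧ G.edgeSet.ncard = d}, graphWeight G =
      (∑ i ∈ Finset.range (d - 2), Nat.choose (2 * d - 1) i) * (d - 1).factorial := by
  obtain ⟨n, rfl⟩ := Nat.exists_eq_add_one.2 (by lia : 0 < d)
  have hcoeff := UnicyclicCount.coeff_one_weightPoly_univ (n + 1)
  rw [UnicyclicCount.coeff_one_weightPoly_one (Finset.card_fin _)] at hcoeff
  rw [← Nat.cast_inj (R := ℤ), ← hcoeff, UnicyclicCount.unicyclicNumber, mul_comm]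
  push_cast
  rfl
end

section
/- Let d ≥ 2 be an integer. Consider multigraphs G on the vertex set {1,…,d} given by an edge-multiplicity function m : {(i,j) : 1 ≤ i < j ≤ d} → ℕ such that the underlying simple graph (the support of m) is a spanning tree of the complete graph on {1,…,d}, exactly one edge has multiplicity 2, and all other edges of the tree have multiplicity 1 (so G has d edges counted with multiplicity, and is connected and spanning). For 2 ≤ j ≤ d let indeg(G,j) = Σ_{i<j} m(i,j), and set w_G = ∏_{j=2}^{d} [ indeg(G,j)! / ∏_{i<j} m(i,j)! ] (the multinomial coefficient of the multiplicities entering j). Then Σ_G w_G = C(2d−1, d−2) · (d−1)!. -/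
/-- A multigraph on `{1,…,d}` given by an edge-multiplicity function
`m : {(i,j) : i < j} → ℕ` (encoded as a function on all pairs, vanishing unless `i < j`)
whose underlying simple graph (the support of `m`) is a spanning tree of the complete
graph, with exactly one edge of multiplicity 2 and all other edges of the tree of
multiplicity 1. -/
def IsDoubledEdgeTree {d : ℕ} (m : Fin d → Fin d → ℕ) : Prop :=
  (∀ i j : Fin d, ¬ i < j → m i j = 0) ∧
  (SimpleGraph.fromRel fun i j => i < j ∧ m i j ≠ 0).IsTree ∧
  (∀ i j : Fin d, i < j → m i j ≠ 0 → m i j = 1 ∨ m i j = 2) ∧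
  {p : Fin d × Fin d | p.1 < p.2 ∧ m p.1 p.2 = 2}.ncard = 1

/-- The weight `w_G = ∏_j [ indeg(G,j)! / ∏_{i<j} m(i,j)! ]` where
`indeg(G,j) = Σ_{i<j} m(i,j)`: a product over vertices of the multinomial coefficients
of the multiplicities of the edges entering each vertex. -/
def multiWeight {d : ℕ} (m : Fin d → Fin d → ℕ) : ℕ :=
  ∏ j : Fin d, Nat.multinomial (Finset.univ.filter (· < j)) (fun i => m i j)

/-!
Fix a power series `Φ` and weigh a graph on `Fin n` by `∏ⱼ kⱼ! · [t ^ kⱼ] Φ`, where `kⱼ` is the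
number of smaller neighbours of `j`. Building rooted forests one vertex at a time, always adding the
largest vertex, chooses for the new vertex a parent and a set of children among the roots that are
not ancestors of that parent. In a forest with `k` roots on `n` vertices, the number of choices
making the new vertex adjacent to `s` old ones is `k` choose `s` plus `n` times `k - 1` choose
`s - 1`. The resulting recursion is solved, by Euler's identity for `t (Φ ^ (n + 1))'`, by
`(N - m)! * ∑ weight = N! * [t ^ m] Φ ^ (N + 1)`, the sum being over rooted forests with `m` edges
on `N + 1` vertices. For `m = N` these are rooted trees, so every tree is counted `N + 1` times.

Doubling an edge entering `j` multiplies the multinomial weight of a tree by `(kⱼ + 1) / 2`, so the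
`kⱼ` edges entering `j` contribute the factor `kⱼ (kⱼ + 1) / 2` in total. A sum over trees of
`(∏ⱼ kⱼ!) * ∑ⱼ bₖⱼ` is the linear term in `ε` of the weight sum for `Φ = ∑ₖ (1 + bₖ ε) t ^ k`, so it
equals `N! * [t ^ N] (1 - t) ^ (-N) * ∑ₖ bₖ t ^ k`, and here `∑ₖ bₖ t ^ k = t / (1 - t) ^ 3`.
-/

open Finset PowerSeries Relation
open scoped Nat

section Coefficient

theorem coeff_X_mul_derivative {R : Type*} [CommSemiring R] (Φ : R⟦X⟧) (k : ℕ) :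
    coeff k (X * d⁄dX R Φ) = k * coeff k Φ := by
  cases k with
  | zero => simp
  | succ k => rw [coeff_succ_X_mul, coeff_derivative, mul_comm, Nat.cast_succ]

/-- Compares coefficients in `X * (Φ ^ (n + 1))' = (n + 1) * Φ ^ n * (X * Φ')`. -/
theorem sum_antidiagonal_mul_coeff_pow_mul_coeff {R : Type*} [CommSemiring R] (Φ : R⟦X⟧)
    (a n m : ℕ) :
    ∑ x ∈ antidiagonal m, ((a + (n + 1) * x.2 : ℕ) : R) * (coeff x.1 (Φ ^ n) * coeff x.2 Φ) =
      ((a + m : ℕ) : R) * coeff m (Φ ^ (n + 1)) := by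
  have hderiv : (m : R) * coeff m (Φ ^ (n + 1)) =
      (n + 1) * ∑ x ∈ antidiagonal m, coeff x.1 (Φ ^ n) * (x.2 * coeff x.2 Φ) := by
    have hX : X * d⁄dX R (Φ ^ (n + 1)) = (n + 1 : ℕ) • (Φ ^ n * (X * d⁄dX R Φ)) := by
      rw [Derivation.leibniz_pow, Nat.add_sub_cancel, smul_eq_mul, mul_smul_comm, mul_left_comm]
    rw [← coeff_X_mul_derivative, hX, map_nsmul, coeff_mul, nsmul_eq_mul, Nat.cast_succ]
    simp only [coeff_X_mul_derivative]
  rw [Nat.cast_add, add_mul, hderiv, pow_succ, coeff_mul, mul_sum, mul_sum, ← sum_add_distrib]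
  refine sum_congr rfl fun x _ => ?_
  push_cast
  ring

end Coefficient

section Weight

open scoped Classical in
/-- The indegree of `j` when every edge is oriented towards its larger endpoint. -/
noncomputable def indegree {n : ℕ} (G : SimpleGraph (Fin n)) (j : Fin n) : ℕ :=
  #{i | i < j ∧ G.Adj i j}

/-- The weight `∏ⱼ kⱼ! * [t ^ kⱼ] Φ` of a graph, where `kⱼ` is the indegree of `j`. -/
noncomputable def indegreeWeight {n : ℕ} {R : Type*} [CommSemiring R] (Φ : R⟦X⟧)
    (G : SimpleGraph (Fin n)) : R :=
  ∏ j, ((indegree G j)! : R) * coeff (indegree G j) Φ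

end Weight

/-- A parent map sends a vertex to its parent, or to `none` if it is a root. A rooted forest is
encoded by its (well-founded) parent map. -/
abbrev ParentMap (V : Type*) := V → Option V

namespace ParentMap

section Structure

variable {V : Type*}

/-- `f.IsParent u v` says that `u` is the parent of `v`. -/
def IsParent (f : ParentMap V) (u v : V) : Prop := f v = some u

/-- A parent map encodes a rooted forest when it has no infinite chain of successive parents. -/
def IsForest (f : ParentMap V) : Prop := WellFounded f.IsParent

/-- The undirected graph underlying a parent map. -/
def graph (f : ParentMap V) : SimpleGraph V := SimpleGraph.fromRel f.IsParent

/-- The set of roots of a parent map on a finite vertex set. -/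
def roots [Fintype V] (f : ParentMap V) : Finset V := {v | f v = none}

/-- The number of non-roots, which for a forest is the number of edges. -/
def numEdges [Fintype V] (f : ParentMap V) : ℕ := #{v | f v ≠ none}

@[simp]
theorem mem_roots [Fintype V] {f : ParentMap V} {v : V} : v ∈ f.roots ↔ f v = none := by
  simp [roots]

theorem card_roots_add_numEdges [Fintype V] (f : ParentMap V) :
    #f.roots + f.numEdges = Fintype.card V :=
  card_filter_add_card_filter_not _

theorem numEdges_eq_sum [Fintype V] (f : ParentMap V) : f.numEdges = ∑ v, #(f v).toFinset := by
  rw [numEdges, card_filter]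
  refine sum_congr rfl fun v _ => ?_
  cases f v <;> simp

theorem IsForest.ne_some_self {f : ParentMap V} (hf : f.IsForest) (v : V) : f v ≠ some v :=
  fun h => hf.asymmetric v v h h

theorem IsForest.adj_graph {f : ParentMap V} (hf : f.IsForest) {u v : V} (h : f.IsParent u v) :
    f.graph.Adj u v :=
  ⟨fun huv => hf.ne_some_self v (huv ▸ h), .inl h⟩

theorem IsForest.existsUnique_root {f : ParentMap V} (hf : f.IsForest) (v : V) :
    ∃! r, f r = none ∧ ReflTransGen f.IsParent r v := by
  induction v using hf.induction with
  | _ v ih =>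
    cases hv : f v with
    | none =>
      refine ⟨v, ⟨hv, .refl⟩, fun r hr => ?_⟩
      rcases hr.2.cases_tail with h | ⟨u, -, hu⟩
      · exact h.symm
      · exact absurd (hv.symm.trans hu) nofun
    | some u =>
      obtain ⟨r, ⟨hr, hru⟩, hunique⟩ := ih u hv
      refine ⟨r, ⟨hr, hru.tail hv⟩, fun s hs => hunique s ⟨hs.1, ?_⟩⟩
      rcases hs.2.cases_tail with rfl | ⟨w, hw, hwv⟩
      · exact absurd (hs.1.symm.trans hv) nofun
      · rwa [← Option.some.inj (hwv.symm.trans hv)]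

theorem IsForest.roots_nonempty [Fintype V] [Nonempty V] {f : ParentMap V} (hf : f.IsForest) :
    f.roots.Nonempty := by
  obtain ⟨r, hr, -⟩ := (hf.existsUnique_root (Classical.arbitrary V)).exists
  exact ⟨r, mem_roots.2 hr⟩

open scoped Classical in
/-- The roots that may become children of a new vertex whose parent is `p` without creating a
cycle: those that are not ancestors of `p`. -/
noncomputable def freeRoots [Fintype V] (f : ParentMap V) (p : Option V) : Finset V :=
  {r ∈ f.roots | ∀ v ∈ p, ¬ ReflTransGen f.IsParent r v}

theorem mem_freeRoots [Fintype V] {f : ParentMap V} {p : Option V} {r : V} :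
    r ∈ f.freeRoots p ↔ f r = none ∧ ∀ v ∈ p, ¬ ReflTransGen f.IsParent r v := by
  simp [freeRoots]

theorem freeRoots_subset_roots [Fintype V] (f : ParentMap V) (p : Option V) :
    f.freeRoots p ⊆ f.roots :=
  fun _ hr => mem_roots.2 (mem_freeRoots.1 hr).1

theorem freeRoots_none [Fintype V] (f : ParentMap V) : f.freeRoots none = f.roots := by
  ext
  simp [mem_freeRoots]

theorem IsForest.card_freeRoots_some [Fintype V] {f : ParentMap V} (hf : f.IsForest) (v : V) :
    #(f.freeRoots (some v)) = #f.roots - 1 := by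
  classical
  obtain ⟨r, ⟨hr, hrv⟩, hunique⟩ := hf.existsUnique_root v
  have herase : f.freeRoots (some v) = f.roots.erase r := by
    ext s
    simp only [mem_freeRoots, Option.mem_some_iff, forall_eq', mem_erase, mem_roots]
    refine ⟨fun h => ⟨?_, h.1⟩, fun h => ⟨h.2, fun hsv => h.1 (hunique s ⟨h.2, hsv⟩)⟩⟩
    rintro rfl
    exact h.2 hrv
  rw [herase, card_erase_of_mem (mem_roots.2 hr)]

theorem notMem_of_subset_freeRoots [Fintype V] {f : ParentMap V} {p : Option V} {C : Finset V}
    (hC : C ⊆ f.freeRoots p) {v : V} (hv : v ∈ p) : v ∉ C :=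
  fun h => (mem_freeRoots.1 (hC h)).2 v hv .refl

end Structure

section Attach

variable {n : ℕ} {f : ParentMap (Fin n)} {p : Option (Fin n)} {C : Finset (Fin n)}

/-- Adds a new largest vertex with parent `p` and set of children `C` (meant to consist of roots
of `f`). -/
def attach (f : ParentMap (Fin n)) (p : Option (Fin n)) (C : Finset (Fin n)) :
    ParentMap (Fin (n + 1)) :=
  Fin.lastCases (p.map Fin.castSucc)
    fun v => if v ∈ C then some (Fin.last n) else (f v).map Fin.castSucc

@[simp]
theorem attach_last : f.attach p C (Fin.last n) = p.map Fin.castSucc := by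
  simp [attach]

@[simp]
theorem attach_castSucc (v : Fin n) :
    f.attach p C v.castSucc = if v ∈ C then some (Fin.last n) else (f v).map Fin.castSucc := by
  simp [attach]

theorem isParent_attach_castSucc_castSucc (hC : C ⊆ f.roots) (u v : Fin n) :
    (f.attach p C).IsParent u.castSucc v.castSucc ↔ f.IsParent u v := by
  by_cases hv : v ∈ C
  · simp [IsParent, hv, mem_roots.1 (hC hv), (Fin.castSucc_lt_last u).ne']
  · simp [IsParent, hv]

theorem isParent_attach_last_castSucc (v : Fin n) :
    (f.attach p C).IsParent (Fin.last n) v.castSucc ↔ v ∈ C := by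
  by_cases hv : v ∈ C <;> simp [IsParent, hv, (Fin.castSucc_lt_last _).ne]

theorem isParent_attach_castSucc_last (u : Fin n) :
    (f.attach p C).IsParent u.castSucc (Fin.last n) ↔ u ∈ p := by
  simp [IsParent]

theorem not_isParent_attach_last_last : ¬ (f.attach p C).IsParent (Fin.last n) (Fin.last n) := by
  simp [IsParent, (Fin.castSucc_lt_last _).ne]

theorem IsForest.of_attach (hC : C ⊆ f.roots) (h : (f.attach p C).IsForest) : f.IsForest :=
  Subrelation.wf (fun huv => (isParent_attach_castSucc_castSucc hC _ _).2 huv)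
    (InvImage.wf Fin.castSucc h)

theorem IsForest.subset_freeRoots_of_attach (hC : C ⊆ f.roots) (h : (f.attach p C).IsForest) :
    C ⊆ f.freeRoots p := by
  refine fun r hr => mem_freeRoots.2 ⟨mem_roots.1 (hC hr), fun v hv hrv => ?_⟩
  have hpath : ReflTransGen (f.attach p C).IsParent r.castSucc v.castSucc :=
    hrv.lift Fin.castSucc fun _ _ huv => (isParent_attach_castSucc_castSucc hC _ _).2 huv
  have hcycle : TransGen (f.attach p C).IsParent (Fin.last n) (Fin.last n) :=
    (TransGen.head' ((isParent_attach_last_castSucc r).2 hr) hpath).tail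
      ((isParent_attach_castSucc_last v).2 hv)
  exact h.transGen.irrefl.irrefl _ hcycle

theorem IsForest.attach (hf : f.IsForest) (hC : C ⊆ f.freeRoots p) : (f.attach p C).IsForest := by
  have hC' : C ⊆ f.roots := hC.trans (f.freeRoots_subset_roots p)
  have hold (v : Fin n) (hv : ∀ r ∈ C, ¬ ReflTransGen f.IsParent r v) :
      Acc (f.attach p C).IsParent v.castSucc := by
    induction v using hf.induction with
    | _ v ih =>
      refine ⟨_, Fin.lastCases (fun h => ?_) fun u h => ?_⟩
      · exact absurd .refl (hv v ((isParent_attach_last_castSucc v).1 h))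
      · have huv := (isParent_attach_castSucc_castSucc hC' u v).1 h
        exact ih u huv fun r hr hru => hv r hr (hru.tail huv)
  have hlast : Acc (f.attach p C).IsParent (Fin.last n) := by
    refine ⟨_, Fin.lastCases (fun h => absurd h not_isParent_attach_last_last) fun u h => ?_⟩
    have hu := (isParent_attach_castSucc_last u).1 h
    exact hold u fun r hr => (mem_freeRoots.1 (hC hr)).2 u hu
  refine ⟨Fin.lastCases hlast fun v => ?_⟩
  induction v using hf.induction with
  | _ v ih =>
    refine ⟨_, Fin.lastCases (fun _ => hlast) fun u h => ?_⟩
    exact ih u ((isParent_attach_castSucc_castSucc hC' u v).1 h)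

theorem numEdges_attach (hC : C ⊆ f.roots) :
    (f.attach p C).numEdges = f.numEdges + (#C + #p.toFinset) := by
  have hold (v : Fin n) :
      #(f.attach p C v.castSucc).toFinset = #(f v).toFinset + if v ∈ C then 1 else 0 := by
    by_cases hv : v ∈ C
    · simp [hv, mem_roots.1 (hC hv)]
    · cases hfv : f v <;> simp [hv, hfv]
  have hlast : #(f.attach p C (Fin.last n)).toFinset = #p.toFinset := by
    cases p <;> simp
  rw [numEdges_eq_sum, numEdges_eq_sum, Fin.sum_univ_castSucc, hlast, ← add_assoc]
  simp_rw [hold, sum_add_distrib]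
  simp

theorem graph_attach_adj_castSucc (hC : C ⊆ f.roots) (u v : Fin n) :
    (f.attach p C).graph.Adj u.castSucc v.castSucc ↔ f.graph.Adj u v := by
  simp [graph, isParent_attach_castSucc_castSucc hC]

theorem graph_attach_adj_last (v : Fin n) :
    (f.attach p C).graph.Adj v.castSucc (Fin.last n) ↔ v ∈ p.toFinset ∨ v ∈ C := by
  simp [graph, isParent_attach_castSucc_last, isParent_attach_last_castSucc,
    (Fin.castSucc_lt_last v).ne]

theorem indegree_graph_attach_castSucc (hC : C ⊆ f.roots) (j : Fin n) :
    indegree (f.attach p C).graph j.castSucc = indegree f.graph j := by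
  classical
  rw [indegree, card_filter, Fin.sum_univ_castSucc, indegree, card_filter]
  simp only [(Fin.castSucc_lt_last j).not_gt, false_and, if_false, add_zero]
  exact sum_congr rfl fun i _ => if_congr
    (and_congr Fin.castSucc_lt_castSucc_iff (graph_attach_adj_castSucc hC i j)) rfl rfl

theorem indegree_graph_attach_last (hC : C ⊆ f.freeRoots p) :
    indegree (f.attach p C).graph (Fin.last n) = #C + #p.toFinset := by
  have hdisj : Disjoint p.toFinset C :=
    disjoint_left.2 fun v hv => notMem_of_subset_freeRoots hC (Option.mem_toFinset.1 hv)
  rw [add_comm #C, ← card_union_of_disjoint hdisj, indegree, card_filter, Fin.sum_univ_castSucc]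
  simp only [graph_attach_adj_last, Fin.castSucc_lt_last, lt_irrefl, true_and, false_and,
    if_false, add_zero, ← mem_union]
  rw [← card_filter, filter_univ_mem]

theorem indegreeWeight_graph_attach {R : Type*} [CommSemiring R] (Φ : R⟦X⟧)
    (hC : C ⊆ f.freeRoots p) :
    indegreeWeight Φ (f.attach p C).graph = indegreeWeight Φ f.graph *
      (((#C + #p.toFinset)! : R) * coeff (#C + #p.toFinset) Φ) := by
  rw [indegreeWeight, Fin.prod_univ_castSucc, indegree_graph_attach_last hC]
  simp only [indegree_graph_attach_castSucc (hC.trans (f.freeRoots_subset_roots p)), indegreeWeight]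

open scoped Classical in
/-- The ways `(p, C)` of choosing the parent and the children of a new largest vertex of a rooted
forest so that it becomes adjacent to `s` old vertices. -/
noncomputable def attachments (f : ParentMap (Fin n)) (s : ℕ) :
    Finset (Option (Fin n) × Finset (Fin n)) :=
  {x | x.2 ⊆ f.freeRoots x.1 ∧ #x.2 + #x.1.toFinset = s}

theorem mem_attachments {s : ℕ} {x : Option (Fin n) × Finset (Fin n)} :
    x ∈ f.attachments s ↔ x.2 ⊆ f.freeRoots x.1 ∧ #x.2 + #x.1.toFinset = s := by
  simp [attachments]

/-- Removes the largest vertex, whose children become roots. -/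
def restrict (g : ParentMap (Fin (n + 1))) : ParentMap (Fin n) :=
  fun v => (g v.castSucc).bind finSuccEquivLast

/-- The children of the largest vertex. -/
def lastChildren (g : ParentMap (Fin (n + 1))) : Finset (Fin n) :=
  {v | g v.castSucc = some (Fin.last n)}

/-- The parent of the largest vertex. -/
def lastParent (g : ParentMap (Fin (n + 1))) : Option (Fin n) :=
  (g (Fin.last n)).bind finSuccEquivLast

theorem lastChildren_subset_roots (g : ParentMap (Fin (n + 1))) :
    g.lastChildren ⊆ g.restrict.roots := by
  intro v hv
  simp_all [lastChildren, restrict]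

theorem restrict_attach (hC : C ⊆ f.roots) : (f.attach p C).restrict = f := by
  funext v
  by_cases hv : v ∈ C
  · simp [restrict, hv, mem_roots.1 (hC hv)]
  · cases hfv : f v <;> simp [restrict, hv, hfv]

theorem lastChildren_attach : (f.attach p C).lastChildren = C := by
  ext v
  simp [lastChildren]

theorem lastParent_attach : (f.attach p C).lastParent = p := by
  cases p <;> simp [lastParent]

theorem map_castSucc_bind_finSuccEquivLast {y : Option (Fin (n + 1))} (hy : y ≠ some (Fin.last n)) :
    (y.bind finSuccEquivLast).map Fin.castSucc = y := by
  cases y with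
  | none => rfl
  | some y =>
    induction y using Fin.lastCases with
    | last => exact absurd rfl hy
    | cast y => simp

theorem IsForest.attach_restrict {g : ParentMap (Fin (n + 1))} (hg : g.IsForest) :
    g.restrict.attach g.lastParent g.lastChildren = g := by
  funext x
  induction x using Fin.lastCases with
  | last => rw [attach_last, lastParent, map_castSucc_bind_finSuccEquivLast (hg.ne_some_self _)]
  | cast v =>
    by_cases hv : g v.castSucc = some (Fin.last n)
    · simp [lastChildren, hv]
    · rw [attach_castSucc, if_neg (by simpa [lastChildren] using hv), restrict,
        map_castSucc_bind_finSuccEquivLast hv]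

end Attach

section Counting

open scoped Classical in
/-- The rooted forests on `Fin n` with `m` edges. -/
noncomputable def forests (n m : ℕ) : Finset (ParentMap (Fin n)) :=
  {f | f.IsForest ∧ f.numEdges = m}

theorem mem_forests {n m : ℕ} {f : ParentMap (Fin n)} :
    f ∈ forests n m ↔ f.IsForest ∧ f.numEdges = m := by
  simp [forests]

theorem forests_one_zero : forests 1 0 = {fun _ => none} := by
  ext f
  have hnum : f.numEdges = 0 ↔ f = fun _ => none := by
    simp [numEdges, filter_eq_empty_iff, funext_iff]
  rw [mem_forests, mem_singleton, hnum, and_iff_right_iff_imp]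
  rintro rfl
  exact ⟨fun v => ⟨v, fun u huv => absurd huv nofun⟩⟩

theorem sum_forests_succ {M : Type*} [AddCommMonoid M] {n : ℕ} (m : ℕ)
    (F : ParentMap (Fin (n + 1)) → M) :
    ∑ g ∈ forests (n + 1) m, F g =
      ∑ x ∈ antidiagonal m, ∑ f ∈ forests n x.1, ∑ y ∈ f.attachments x.2, F (f.attach y.1 y.2) := by
  simp_rw [sum_sigma']
  refine (sum_bij' (fun t _ => t.2.1.attach t.2.2.1 t.2.2.2)
    (fun g _ => ⟨(g.restrict.numEdges, #g.lastChildren + #g.lastParent.toFinset),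
      g.restrict, (g.lastParent, g.lastChildren)⟩) ?_ ?_ ?_ ?_ fun _ _ => rfl).symm
  · rintro ⟨⟨l, s⟩, f, p, C⟩ h
    simp only [mem_sigma, HasAntidiagonal.mem_antidiagonal, mem_forests, mem_attachments] at h ⊢
    obtain ⟨hls, ⟨hf, hl⟩, hC, hs⟩ := h
    refine ⟨hf.attach hC, ?_⟩
    rw [numEdges_attach (hC.trans (f.freeRoots_subset_roots p)), hl, hs, hls]
  · intro g hg
    simp only [mem_sigma, HasAntidiagonal.mem_antidiagonal, mem_forests, mem_attachments] at hg ⊢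
    have hroots := g.lastChildren_subset_roots
    have hattach : (g.restrict.attach g.lastParent g.lastChildren).IsForest := by
      rw [hg.1.attach_restrict]
      exact hg.1
    refine ⟨?_, ⟨hattach.of_attach hroots, trivial⟩,
      hattach.subset_freeRoots_of_attach hroots, trivial⟩
    rw [← numEdges_attach hroots, hg.1.attach_restrict, hg.2]
  · rintro ⟨⟨l, s⟩, f, p, C⟩ h
    simp only [mem_sigma, HasAntidiagonal.mem_antidiagonal, mem_forests, mem_attachments] at h
    obtain ⟨-, ⟨-, rfl⟩, hC, rfl⟩ := h
    simp only [restrict_attach (hC.trans (f.freeRoots_subset_roots p)), lastChildren_attach,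
      lastParent_attach]
  · intro g hg
    exact (mem_forests.1 hg).1.attach_restrict

theorem card_attachments_zero {n : ℕ} (f : ParentMap (Fin n)) : #(f.attachments 0) = 1 := by
  refine card_eq_one.2 ⟨(none, ∅), ?_⟩
  ext ⟨p, C⟩
  cases p <;> simp +contextual [mem_attachments]

theorem IsForest.card_attachments_succ {n : ℕ} {f : ParentMap (Fin n)} (hf : f.IsForest)
    (s : ℕ) :
    #(f.attachments (s + 1)) = (#f.roots).choose (s + 1) + n * (#f.roots - 1).choose s := by
  have hfiber (p : Option (Fin n)) : #{x ∈ f.attachments (s + 1) | x.1 = p} =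
      #{C ∈ (f.freeRoots p).powerset | #C + #p.toFinset = s + 1} := by
    refine card_nbij' Prod.snd (p, ·) ?_ ?_ ?_ fun _ _ => rfl
    · rintro ⟨q, C⟩ hx
      obtain ⟨hmem, rfl⟩ := mem_filter.1 hx
      simpa [mem_attachments] using hmem
    · intro C hC
      simpa [mem_attachments] using hC
    · rintro ⟨q, C⟩ hx
      obtain ⟨-, rfl⟩ := mem_filter.1 hx
      rfl
  rw [card_eq_sum_card_fiberwise (t := univ) (f := Prod.fst) (by simp), Fintype.sum_option]
  simp_rw [hfiber]
  simp only [Option.toFinset_none, card_empty, add_zero, freeRoots_none, Option.toFinset_some,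
    card_singleton, Nat.add_right_cancel_iff, ← powersetCard_eq_filter, card_powersetCard,
    hf.card_freeRoots_some, sum_const, card_univ, Fintype.card_fin, smul_eq_mul]

theorem IsForest.factorial_mul_card_attachments {n k s : ℕ} {f : ParentMap (Fin n)}
    (hf : f.IsForest) (hk : #f.roots = k + 1) (hs : s ≤ k + 1) :
    (k + 1 - s)! * (s ! * #(f.attachments s)) = k ! * (k + 1 + n * s) := by
  cases s with
  | zero => simp [card_attachments_zero, Nat.factorial_succ, mul_comm]
  | succ s =>
    have hs' : s ≤ k := Nat.le_of_succ_le_succ hs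
    have hroot := Nat.choose_mul_factorial_mul_factorial hs
    have hnonroot := Nat.choose_mul_factorial_mul_factorial hs'
    rw [hf.card_attachments_succ, hk, Nat.add_sub_cancel]
    rw [Nat.add_sub_add_right] at hroot ⊢
    calc (k - s)! * ((s + 1)! * ((k + 1).choose (s + 1) + n * k.choose s))
        = (k + 1).choose (s + 1) * (s + 1)! * (k - s)! +
            n * ((s + 1) * (k.choose s * s ! * (k - s)!)) := by
          rw [Nat.factorial_succ s]
          ring
      _ = k ! * (k + 1 + n * (s + 1)) := by
          rw [hroot, hnonroot, Nat.factorial_succ]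
          ring

variable {R : Type*} [CommSemiring R]

theorem sum_attachments_indegreeWeight (Φ : R⟦X⟧) {n : ℕ} (f : ParentMap (Fin n)) (s : ℕ) :
    ∑ y ∈ f.attachments s, indegreeWeight Φ (f.attach y.1 y.2).graph =
      ((s ! * #(f.attachments s) : ℕ) : R) * (coeff s Φ * indegreeWeight Φ f.graph) := by
  have hterm : ∀ y ∈ f.attachments s, indegreeWeight Φ (f.attach y.1 y.2).graph =
      indegreeWeight Φ f.graph * ((s ! : R) * coeff s Φ) := by
    intro y hy
    obtain ⟨hC, hs⟩ := mem_attachments.1 hy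
    rw [indegreeWeight_graph_attach Φ hC, hs]
  rw [sum_congr rfl hterm, sum_const, nsmul_eq_mul]
  push_cast
  ring

theorem card_roots_of_mem_forests {N l : ℕ} {f : ParentMap (Fin (N + 1))}
    (hf : f ∈ forests (N + 1) l) : #f.roots = N - l + 1 := by
  have hcard := f.card_roots_add_numEdges
  have hpos := (mem_forests.1 hf).1.roots_nonempty.card_pos
  rw [Fintype.card_fin, (mem_forests.1 hf).2] at hcard
  omega

theorem forests_succ_self_eq_empty (N : ℕ) : forests (N + 1) (N + 1) = ∅ := by
  refine eq_empty_of_forall_notMem fun f hf => ?_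
  have hcard := f.card_roots_add_numEdges
  rw [Fintype.card_fin, (mem_forests.1 hf).2, card_roots_of_mem_forests hf] at hcard
  omega

theorem factorial_mul_sum_attachments {N l s : ℕ} (hls : l + s ≤ N + 1) (Φ : R⟦X⟧)
    (ih : ∀ l ≤ N, ((N - l)! : R) * ∑ f ∈ forests (N + 1) l, indegreeWeight Φ f.graph =
      (N ! : R) * coeff l (Φ ^ (N + 1))) :
    ((N + 1 - (l + s))! : R) *
        ∑ f ∈ forests (N + 1) l, ∑ y ∈ f.attachments s, indegreeWeight Φ (f.attach y.1 y.2).graph =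
      (N ! : R) * (((N + 1 - (l + s) + (N + 1 + 1) * s : ℕ) : R) *
        (coeff l (Φ ^ (N + 1)) * coeff s Φ)) := by
  obtain rfl | hl : l = N + 1 ∨ l ≤ N := by omega
  · obtain rfl : s = 0 := by omega
    simp [forests_succ_self_eq_empty]
  have hcount : ∀ f ∈ forests (N + 1) l, (N + 1 - (l + s))! * (s ! * #(f.attachments s)) =
      (N - l)! * (N + 1 - (l + s) + (N + 1 + 1) * s) := by
    intro f hf
    have h := (mem_forests.1 hf).1.factorial_mul_card_attachments (card_roots_of_mem_forests hf)
      (show s ≤ N - l + 1 by omega)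
    rw [show N + 1 - (l + s) = N - l + 1 - s by omega, h]
    congr 1
    rw [add_one_mul (N + 1) s]
    omega
  calc _ = ∑ f ∈ forests (N + 1) l, (((N + 1 - (l + s))! * (s ! * #(f.attachments s)) : ℕ) : R) *
            (coeff s Φ * indegreeWeight Φ f.graph) := by
        simp_rw [sum_attachments_indegreeWeight, mul_sum]
        push_cast
        simp_rw [mul_assoc]
    _ = ((N + 1 - (l + s) + (N + 1 + 1) * s : ℕ) : R) * coeff s Φ *
          (((N - l)! : R) * ∑ f ∈ forests (N + 1) l, indegreeWeight Φ f.graph) := by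
        rw [mul_sum, mul_sum]
        refine sum_congr rfl fun f hf => ?_
        rw [hcount f hf, Nat.cast_mul]
        ring
    _ = _ := by
        rw [ih l hl]
        ring

theorem factorial_mul_sum_forests (Φ : R⟦X⟧) (N m : ℕ) (hm : m ≤ N) :
    ((N - m)! : R) * ∑ f ∈ forests (N + 1) m, indegreeWeight Φ f.graph =
      (N ! : R) * coeff m (Φ ^ (N + 1)) := by
  induction N generalizing m with
  | zero =>
    obtain rfl := Nat.le_zero.1 hm
    simp [forests_one_zero, indegreeWeight, indegree]
  | succ N ih =>
    rw [sum_forests_succ, mul_sum]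
    calc _ = ∑ x ∈ antidiagonal m, (N ! : R) * (((N + 1 - m + (N + 1 + 1) * x.2 : ℕ) : R) *
              (coeff x.1 (Φ ^ (N + 1)) * coeff x.2 Φ)) := by
          refine sum_congr rfl fun x hx => ?_
          obtain rfl := HasAntidiagonal.mem_antidiagonal.1 hx
          exact factorial_mul_sum_attachments hm Φ ih
      _ = ((N + 1)! : R) * coeff m (Φ ^ (N + 1 + 1)) := by
          rw [← mul_sum, sum_antidiagonal_mul_coeff_pow_mul_coeff, Nat.sub_add_cancel hm,
            Nat.factorial_succ]
          push_cast
          ring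

end Counting

section RootedTree

variable {V : Type*} [Fintype V]

variable {f : ParentMap V} {r : V}

theorem eq_none_iff_of_roots_eq_singleton (hr : f.roots = {r}) (v : V) : f v = none ↔ v = r := by
  rw [← mem_roots, hr, mem_singleton]

theorem IsForest.connected_graph (hf : f.IsForest) (hr : f.roots = {r}) : f.graph.Connected := by
  have hreach (v : V) : f.graph.Reachable r v := by
    induction v using hf.induction with
    | _ v ih =>
      cases hv : f v with
      | none => rw [(eq_none_iff_of_roots_eq_singleton hr v).1 hv]
      | some u => exact (ih u hv).trans (hf.adj_graph hv).reachable
  exact { preconnected := fun u v => (hreach u).symm.trans (hreach v), nonempty := ⟨r⟩ }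

theorem IsForest.isTree_graph (hf : f.IsForest) (hr : f.roots = {r}) : f.graph.IsTree := by
  have hconn := hf.connected_graph hr
  refine SimpleGraph.isTree_iff_connected_and_card.2
    ⟨hconn, le_antisymm ?_ hconn.card_vert_le_card_edgeSet_add_one⟩
  have hedges : f.graph.edgeSet ⊆ (fun v => s((f v).getD v, v)) '' ({r}ᶜ : Set V) := by
    have himage {u v : V} (huv : f.IsParent u v) :
        s(u, v) ∈ (fun v => s((f v).getD v, v)) '' ({r}ᶜ : Set V) := by
      refine ⟨v, fun hv => ?_, by simp [show f v = some u from huv]⟩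
      exact absurd (((eq_none_iff_of_roots_eq_singleton hr v).2 hv).symm.trans huv) nofun
    refine fun e => Sym2.ind (fun u v huv => ?_) e
    exact huv.2.elim himage fun hvu => Sym2.eq_swap ▸ himage hvu
  have hcompl := Set.ncard_add_ncard_compl ({r} : Set V)
  rw [Set.ncard_singleton] at hcompl
  calc Nat.card f.graph.edgeSet + 1 = f.graph.edgeSet.ncard + 1 := by rw [Nat.card_coe_set_eq]
    _ ≤ ({r}ᶜ : Set V).ncard + 1 := by
      gcongr
      exact (Set.ncard_le_ncard hedges).trans Set.ncard_image_le
    _ = Nat.card V := by rw [← hcompl, add_comm]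

theorem IsForest.eq_of_graph_eq {g : ParentMap V} (hg : g.IsForest) (hr : f.roots = g.roots)
    (h : f.graph = g.graph) : f = g := by
  funext v
  induction v using hg.induction with
  | _ v ih =>
    cases hv : g v with
    | none => rwa [← mem_roots, hr, mem_roots]
    | some u =>
      have hadj : f.graph.Adj u v := h ▸ hg.adj_graph hv
      rcases hadj.2 with huv | hvu
      · exact huv
      · exact absurd ((ih u hv).symm.trans hvu) (hg.asymmetric u v hv)

/-- Every vertex other than `r` chooses as its parent a neighbour closer to `r`. -/
theorem exists_isForest_graph_eq {G : SimpleGraph V} (hG : G.IsTree) (r : V) :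
    ∃ f : ParentMap V, f.IsForest ∧ f.roots = {r} ∧ f.graph = G := by
  classical
  have hcloser (v : V) (hv : v ≠ r) : ∃ u, G.Adj u v ∧ G.dist u r < G.dist v r := by
    obtain ⟨w, hw⟩ := hG.connected.exists_walk_length_eq_dist v r
    cases w with
    | nil => exact absurd rfl hv
    | cons h w =>
      refine ⟨_, h.symm, ?_⟩
      rw [← hw, SimpleGraph.Walk.length_cons]
      exact Nat.lt_succ_of_le (SimpleGraph.dist_le w)
  choose! parent hadj hdist using hcloser
  let f : ParentMap V := fun v => if v = r then none else some (parent v)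
  have hparent {u v : V} (huv : f.IsParent u v) : v ≠ r ∧ parent v = u := by
    simpa [f, IsParent] using huv
  have hf : f.IsForest := by
    refine Subrelation.wf (fun {u v} huv => ?_) (measure (G.dist · r)).wf
    obtain ⟨hv, rfl⟩ := hparent huv
    exact hdist v hv
  have hroots : f.roots = {r} := by
    ext v
    simp [f]
  have hsub {u v : V} (huv : f.IsParent u v) : G.Adj u v := by
    obtain ⟨hv, rfl⟩ := hparent huv
    exact hadj v hv
  have hle : f.graph ≤ G := fun u v huv => huv.2.elim hsub fun hvu => (hsub hvu).symm
  have hmin := (SimpleGraph.isTree_iff_minimal_connected.1 hG).2 (hf.isTree_graph hroots).connected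
  exact ⟨f, hf, hroots, le_antisymm hle (hmin hle)⟩

open scoped Classical in
/-- The parent maps encoding trees rooted at `r`. -/
noncomputable def rootedTrees (r : V) : Finset (ParentMap V) :=
  {f | f.IsForest ∧ f.roots = {r}}

theorem mem_rootedTrees {r : V} {f : ParentMap V} :
    f ∈ rootedTrees r ↔ f.IsForest ∧ f.roots = {r} := by
  simp [rootedTrees]

end RootedTree

end ParentMap

section Tree

open ParentMap

open scoped Classical in
/-- The spanning trees of the complete graph on `Fin n`. -/
noncomputable def spanningTrees (n : ℕ) : Finset (SimpleGraph (Fin n)) := {G | G.IsTree}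

theorem mem_spanningTrees {n : ℕ} {G : SimpleGraph (Fin n)} : G ∈ spanningTrees n ↔ G.IsTree := by
  simp [spanningTrees]

theorem sum_rootedTrees {M : Type*} [AddCommMonoid M] {n : ℕ} (r : Fin n)
    (F : SimpleGraph (Fin n) → M) :
    ∑ f ∈ rootedTrees r, F f.graph = ∑ G ∈ spanningTrees n, F G := by
  refine sum_nbij graph (fun f hf => ?_) (fun f hf g hg h => ?_) (fun G hG => ?_) fun _ _ => rfl
  · obtain ⟨hf, hr⟩ := mem_rootedTrees.1 hf
    exact mem_spanningTrees.2 (hf.isTree_graph hr)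
  · obtain ⟨-, hfr⟩ := mem_rootedTrees.1 hf
    obtain ⟨hg, hgr⟩ := mem_rootedTrees.1 hg
    exact hg.eq_of_graph_eq (hfr.trans hgr.symm) h
  · obtain ⟨f, hf, hr, hfG⟩ := exists_isForest_graph_eq (mem_spanningTrees.1 hG) r
    exact ⟨f, mem_rootedTrees.2 ⟨hf, hr⟩, hfG⟩

theorem forests_eq_biUnion_rootedTrees (N : ℕ) [DecidableEq (ParentMap (Fin (N + 1)))] :
    forests (N + 1) N = univ.biUnion rootedTrees := by
  ext f
  have hcard := f.card_roots_add_numEdges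
  rw [Fintype.card_fin] at hcard
  simp only [mem_forests, mem_biUnion, mem_univ, true_and, mem_rootedTrees, exists_and_left]
  refine and_congr_right fun _ => ?_
  rw [← card_eq_one]
  omega

theorem sum_forests_eq_nsmul_sum_spanningTrees {M : Type*} [AddCommMonoid M] (N : ℕ)
    (F : SimpleGraph (Fin (N + 1)) → M) :
    ∑ f ∈ forests (N + 1) N, F f.graph = (N + 1) • ∑ G ∈ spanningTrees (N + 1), F G := by
  classical
  have hdisj (r s : Fin (N + 1)) (hrs : r ≠ s) : Disjoint (rootedTrees r) (rootedTrees s) := by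
    refine disjoint_left.2 fun f hr hs => hrs ?_
    exact singleton_injective ((mem_rootedTrees.1 hr).2.symm.trans (mem_rootedTrees.1 hs).2)
  rw [forests_eq_biUnion_rootedTrees, sum_biUnion fun r _ s _ => hdisj r s]
  simp_rw [sum_rootedTrees]
  simp

theorem succ_mul_sum_spanningTrees_indegreeWeight {R : Type*} [CommSemiring R] (Φ : R⟦X⟧) (N : ℕ) :
    (N + 1 : R) * ∑ G ∈ spanningTrees (N + 1), indegreeWeight Φ G =
      (N ! : R) * coeff N (Φ ^ (N + 1)) := by
  have h := factorial_mul_sum_forests Φ N N le_rfl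
  rwa [Nat.sub_self, Nat.factorial_zero, Nat.cast_one, one_mul,
    sum_forests_eq_nsmul_sum_spanningTrees, nsmul_eq_mul, Nat.cast_succ] at h

end Tree

section FirstOrder

open DualNumber TrivSqZeroExt

variable {R : Type*} [CommSemiring R]

/-- The first-order perturbation `Φ + ε Ψ` of a power series. -/
noncomputable def perturb (Φ Ψ : R⟦X⟧) : R[ε]⟦X⟧ :=
  Φ.map (inlHom R R) + C ε * Ψ.map (inlHom R R)

theorem coeff_perturb (Φ Ψ : R⟦X⟧) (k : ℕ) :
    coeff k (perturb Φ Ψ) = inl (coeff k Φ) + inr (coeff k Ψ) := by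
  simp [perturb, inr_eq_smul_eps, ← inl_mul_eq_smul, mul_comm]

theorem perturb_pow_succ (Φ Ψ : R⟦X⟧) (n : ℕ) :
    perturb Φ Ψ ^ (n + 1) = perturb (Φ ^ (n + 1)) ((n + 1) • (Φ ^ n * Ψ)) := by
  obtain ⟨K, hK⟩ :=
    Polynomial.powAddExpansion (Φ.map (inlHom R R)) (C ε * Ψ.map (inlHom R R)) (n + 1)
  have hsq : (C (ε : R[ε]) * Ψ.map (inlHom R R)) ^ 2 = 0 := by
    rw [mul_pow, ← map_pow, eps_pow_two, map_zero, zero_mul]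
  rw [perturb, hK, hsq, perturb, Nat.add_sub_cancel, nsmul_eq_mul]
  simp only [map_mul, map_pow, map_natCast]
  ring

theorem prod_one_add_inr {ι : Type*} (s : Finset ι) (x : ι → R) :
    ∏ i ∈ s, (1 + inr (x i) : R[ε]) = 1 + inr (∑ i ∈ s, x i) := by
  classical
  induction s using Finset.induction_on with
  | empty => simp
  | insert i s hi ih =>
    rw [prod_insert hi, sum_insert hi, ih, add_mul, one_mul, mul_add, mul_one, inr_mul_inr,
      add_zero, inr_add, add_assoc, add_comm (inr (x i))]

theorem snd_indegreeWeight_perturb_mk_one {n : ℕ} (Ψ : R⟦X⟧) (G : SimpleGraph (Fin n)) :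
    (indegreeWeight (perturb (PowerSeries.mk 1) Ψ) G).snd =
      ((∏ j, (indegree G j)! : ℕ) : R) * ∑ j, coeff (indegree G j) Ψ := by
  have hcoeff (k : ℕ) : coeff k (perturb (PowerSeries.mk 1) Ψ) = 1 + inr (coeff k Ψ) := by
    rw [coeff_perturb, coeff_mk, Pi.one_apply, inl_one]
  simp_rw [indegreeWeight, hcoeff]
  rw [prod_mul_distrib, prod_one_add_inr, ← Nat.cast_prod]
  simp [-Nat.cast_prod]

theorem succ_mul_sum_spanningTrees_prod_factorial_mul_sum_coeff (Ψ : R⟦X⟧) (N : ℕ) :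
    (N + 1 : R) * ∑ G ∈ spanningTrees (N + 1),
        ((∏ j, (indegree G j)! : ℕ) : R) * ∑ j, coeff (indegree G j) Ψ =
      (N + 1) * (N ! * coeff N (PowerSeries.mk 1 ^ N * Ψ)) := by
  have h := succ_mul_sum_spanningTrees_indegreeWeight (perturb (PowerSeries.mk 1) Ψ) N
  rw [← Nat.cast_succ, perturb_pow_succ, coeff_perturb] at h
  calc _ = snd (((N + 1 : ℕ) : R[ε]) *
        ∑ G ∈ spanningTrees (N + 1), indegreeWeight (perturb (PowerSeries.mk 1) Ψ) G) := by
        simp [snd_sum, snd_indegreeWeight_perturb_mk_one]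
    _ = _ := by
        rw [h, map_nsmul]
        simp [mul_left_comm]

theorem coeff_X_mul_mk_one_pow_three (k : ℕ) :
    coeff k (X * PowerSeries.mk 1 ^ 3 : ℤ⟦X⟧) = (k + 1).choose 2 := by
  cases k with
  | zero => simp
  | succ k => rw [coeff_succ_X_mul, PowerSeries.mk_one_pow_eq_mk_choose_add, coeff_mk, add_comm 2]

theorem sum_spanningTrees_prod_factorial_mul_sum_choose (N : ℕ) :
    ∑ G ∈ spanningTrees (N + 2), (∏ j, (indegree G j)!) * ∑ j, (indegree G j + 1).choose 2 =
      (N + 1)! * (2 * N + 3).choose N := by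
  have h := succ_mul_sum_spanningTrees_prod_factorial_mul_sum_coeff
    (X * PowerSeries.mk 1 ^ 3 : ℤ⟦X⟧) (N + 1)
  have hcoeff : coeff (N + 1) (PowerSeries.mk 1 ^ (N + 1) * (X * PowerSeries.mk 1 ^ 3) : ℤ⟦X⟧) =
      (2 * N + 3).choose N := by
    rw [mul_left_comm, ← pow_add, coeff_succ_X_mul, PowerSeries.mk_one_pow_eq_mk_choose_add,
      coeff_mk]
    rw [show N + 1 + 2 + N = 2 * N + 3 by ring, Nat.choose_symm_of_eq_add (by ring)]
  simp_rw [hcoeff, coeff_X_mul_mk_one_pow_three] at h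
  exact_mod_cast mul_left_cancel₀ (by positivity) h

end FirstOrder

section Multigraph

variable {n : ℕ}

/-- The graph of the pairs of nonzero multiplicity, as in `IsDoubledEdgeTree`. -/
abbrev supportGraph (m : Fin n → Fin n → ℕ) : SimpleGraph (Fin n) :=
  SimpleGraph.fromRel fun i j => i < j ∧ m i j ≠ 0

open scoped Classical in
/-- The edges of a graph, as pairs with increasing entries. -/
noncomputable def edgePairs (G : SimpleGraph (Fin n)) : Finset (Fin n × Fin n) :=
  {e | e.1 < e.2 ∧ G.Adj e.1 e.2}

open scoped Classical in
/-- The multiplicity function of the multigraph obtained from `G` by doubling the edge `e`. -/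
noncomputable def doubleEdge (G : SimpleGraph (Fin n)) (e : Fin n × Fin n) (i j : Fin n) : ℕ :=
  if (i, j) ∈ edgePairs G then if (i, j) = e then 2 else 1 else 0

variable {G : SimpleGraph (Fin n)} {e : Fin n × Fin n} {i j : Fin n}

theorem mem_edgePairs : e ∈ edgePairs G ↔ e.1 < e.2 ∧ G.Adj e.1 e.2 := by
  simp [edgePairs]

theorem doubleEdge_ne_zero : doubleEdge G e i j ≠ 0 ↔ (i, j) ∈ edgePairs G := by
  unfold doubleEdge
  split_ifs <;> simp_all

theorem doubleEdge_eq_two : doubleEdge G e i j = 2 ↔ (i, j) ∈ edgePairs G ∧ (i, j) = e := by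
  unfold doubleEdge
  split_ifs <;> simp_all

theorem mem_edgePairs_supportGraph {m : Fin n → Fin n → ℕ} :
    (i, j) ∈ edgePairs (supportGraph m) ↔ i < j ∧ m i j ≠ 0 := by
  rw [mem_edgePairs, SimpleGraph.fromRel_adj]
  refine and_congr_right fun hij => ?_
  simp [hij, hij.ne, hij.not_gt]

theorem supportGraph_doubleEdge : supportGraph (doubleEdge G e) = G := by
  ext i j
  simp only [SimpleGraph.fromRel_adj, doubleEdge_ne_zero, mem_edgePairs]
  rcases lt_trichotomy i j with h | rfl | h
  · simp [h, h.ne, h.not_gt]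
  · simp
  · simp [h, h.ne', h.not_gt, G.adj_comm]

theorem isDoubledEdgeTree_doubleEdge (hG : G.IsTree) (he : e ∈ edgePairs G) :
    IsDoubledEdgeTree (doubleEdge G e) := by
  refine ⟨fun i j hij => ?_, ?_, fun i j _ h => ?_, ?_⟩
  · exact of_not_not fun h => hij (mem_edgePairs.1 (doubleEdge_ne_zero.1 h)).1
  · change (supportGraph (doubleEdge G e)).IsTree
    rwa [supportGraph_doubleEdge]
  · rw [doubleEdge, if_pos (doubleEdge_ne_zero.1 h)]
    split_ifs <;> simp
  · have hdoubled : {p : Fin n × Fin n | p.1 < p.2 ∧ doubleEdge G e p.1 p.2 = 2} = {e} := by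
      ext p
      simp only [Set.mem_ofPred_eq, doubleEdge_eq_two, Set.mem_singleton_iff]
      refine ⟨fun h => h.2.2, ?_⟩
      rintro rfl
      exact ⟨(mem_edgePairs.1 he).1, he, rfl⟩
    rw [hdoubled, Set.ncard_singleton]

theorem IsDoubledEdgeTree.exists_eq_doubleEdge {m : Fin n → Fin n → ℕ} (hm : IsDoubledEdgeTree m) :
    ∃ e ∈ edgePairs (supportGraph m), doubleEdge (supportGraph m) e = m := by
  obtain ⟨hlower, -, hmult, hdoubled⟩ := hm
  obtain ⟨e, he⟩ := Set.ncard_eq_one.1 hdoubled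
  have htwo (i j : Fin n) : i < j ∧ m i j = 2 ↔ (i, j) = e := Set.ext_iff.1 he (i, j)
  obtain ⟨hlt, he2⟩ := (htwo e.1 e.2).2 rfl
  refine ⟨e, mem_edgePairs_supportGraph.2 ⟨hlt, he2 ▸ two_ne_zero⟩, ?_⟩
  funext i j
  simp only [doubleEdge, mem_edgePairs_supportGraph]
  split_ifs with hij hije
  · exact ((htwo i j).2 hije).2.symm
  · exact ((hmult i j hij.1 hij.2).resolve_right fun h => hije ((htwo i j).1 ⟨hij.1, h⟩)).symm
  · by_contra h
    exact hij ⟨of_not_not fun hlt => h (hlower i j hlt).symm, Ne.symm h⟩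

theorem bijOn_doubleEdge (n : ℕ) :
    Set.BijOn (fun x : Σ _ : SimpleGraph (Fin n), Fin n × Fin n => doubleEdge x.1 x.2)
      ((spanningTrees n).sigma edgePairs)
      {m : Fin n → Fin n → ℕ | IsDoubledEdgeTree m} := by
  refine ⟨fun x hx => ?_, fun x hx y hy hxy => ?_, fun m hm => ?_⟩
  · obtain ⟨hG, he⟩ := mem_sigma.1 hx
    exact isDoubledEdgeTree_doubleEdge (mem_spanningTrees.1 hG) he
  · obtain ⟨G, e⟩ := x
    obtain ⟨H, e'⟩ := y
    dsimp only at hxy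
    obtain rfl : G = H := by
      rw [← supportGraph_doubleEdge (G := G) (e := e), hxy, supportGraph_doubleEdge]
    have he : doubleEdge G e e.1 e.2 = 2 := doubleEdge_eq_two.2 ⟨(mem_sigma.1 hx).2, rfl⟩
    rw [hxy] at he
    obtain rfl : e = e' := (doubleEdge_eq_two.1 he).2
    rfl
  · obtain ⟨e, he, hme⟩ := IsDoubledEdgeTree.exists_eq_doubleEdge hm
    exact ⟨⟨supportGraph m, e⟩, mem_sigma.2 ⟨mem_spanningTrees.2 hm.2.1, he⟩, hme⟩

theorem finsum_isDoubledEdgeTree {M : Type*} [AddCommMonoid M] (F : (Fin n → Fin n → ℕ) → M) :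
    ∑ᶠ m ∈ {m : Fin n → Fin n → ℕ | IsDoubledEdgeTree m}, F m =
      ∑ G ∈ spanningTrees n, ∑ e ∈ edgePairs G, F (doubleEdge G e) := by
  rw [← finsum_mem_eq_of_bijOn (f := fun x : Σ _, _ => F (doubleEdge x.1 x.2)) _
    (bijOn_doubleEdge n) fun _ _ => rfl, finsum_mem_coe_finset, sum_sigma]

theorem sum_edgePairs {M : Type*} [AddCommMonoid M] (G : SimpleGraph (Fin n)) (F : Fin n → M) :
    ∑ e ∈ edgePairs G, F e.2 = ∑ j, indegree G j • F j := by
  classical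
  rw [edgePairs, sum_filter, Fintype.sum_prod_type_right]
  refine sum_congr rfl fun j _ => ?_
  rw [indegree, ← sum_const, sum_filter]

theorem doubleEdge_eq_add (he : e ∈ edgePairs G) :
    doubleEdge G e i j =
      (if (i, j) ∈ edgePairs G then 1 else 0) + if (i, j) = e then 1 else 0 := by
  unfold doubleEdge
  split_ifs <;> simp_all

theorem factorial_doubleEdge (he : e ∈ edgePairs G) :
    (doubleEdge G e i j)! = if (i, j) = e then 2 else 1 := by
  unfold doubleEdge
  split_ifs <;> simp_all

theorem sum_doubleEdge (he : e ∈ edgePairs G) (j : Fin n) :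
    ∑ i with i < j, doubleEdge G e i j = indegree G j + if j = e.2 then 1 else 0 := by
  simp_rw [doubleEdge_eq_add he, sum_add_distrib]
  congr 1
  · rw [← card_filter, filter_filter, indegree]
    congr 1
    ext i
    simp [mem_edgePairs]
  · obtain ⟨a, b⟩ := e
    rcases eq_or_ne j b with rfl | hj
    · simp [(mem_edgePairs.1 he).1]
    · simp [hj]

theorem prod_factorial_doubleEdge (he : e ∈ edgePairs G) (j : Fin n) :
    ∏ i with i < j, (doubleEdge G e i j)! = if j = e.2 then 2 else 1 := by
  simp_rw [factorial_doubleEdge he]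
  obtain ⟨a, b⟩ := e
  rcases eq_or_ne j b with rfl | hj
  · simp [(mem_edgePairs.1 he).1]
  · simp [hj]

theorem two_mul_multiWeight_doubleEdge (he : e ∈ edgePairs G) :
    2 * multiWeight (doubleEdge G e) = (∏ j, (indegree G j)!) * (indegree G e.2 + 1) := by
  have hfactorial (j : Fin n) : (indegree G j + if j = e.2 then 1 else 0)! =
      (indegree G j)! * if j = e.2 then indegree G e.2 + 1 else 1 := by
    split_ifs with hj
    · rw [Nat.factorial_succ, hj, mul_comm]
    · rw [add_zero, mul_one]
  calc 2 * multiWeight (doubleEdge G e)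
      = ∏ j, (∏ i with i < j, (doubleEdge G e i j)!) *
          Nat.multinomial {i | i < j} (fun i => doubleEdge G e i j) := by
        rw [prod_mul_distrib, multiWeight]
        simp [prod_factorial_doubleEdge he]
    _ = ∏ j, (indegree G j + if j = e.2 then 1 else 0)! := by
        simp_rw [Nat.multinomial_spec, sum_doubleEdge he]
    _ = (∏ j, (indegree G j)!) * (indegree G e.2 + 1) := by
        simp_rw [hfactorial]
        rw [prod_mul_distrib, prod_ite_eq', if_pos (mem_univ _)]

theorem sum_multiWeight_doubleEdge (G : SimpleGraph (Fin n)) :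
    ∑ e ∈ edgePairs G, multiWeight (doubleEdge G e) =
      (∏ j, (indegree G j)!) * ∑ j, (indegree G j + 1).choose 2 := by
  refine mul_left_cancel₀ two_ne_zero ?_
  have hchoose (k : ℕ) : k * (k + 1) = 2 * (k + 1).choose 2 := by
    rw [mul_comm k, mul_comm 2, ← Nat.add_one_mul_choose_eq k 1, Nat.choose_one_right]
  calc 2 * ∑ e ∈ edgePairs G, multiWeight (doubleEdge G e)
      = ∑ e ∈ edgePairs G, (∏ j, (indegree G j)!) * (indegree G e.2 + 1) := by
        rw [mul_sum]
        exact sum_congr rfl fun e he => two_mul_multiWeight_doubleEdge he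
    _ = 2 * ((∏ j, (indegree G j)!) * ∑ j, (indegree G j + 1).choose 2) := by
        rw [← mul_sum, sum_edgePairs G fun j => indegree G j + 1, mul_left_comm]
        simp_rw [smul_eq_mul, hchoose, ← mul_sum]

end Multigraph

theorem weighted_doubled_edge_tree_count (d : ℕ) (hd : 2 ≤ d) :
    ∑ᶠ m ∈ {m : Fin d → Fin d → ℕ | IsDoubledEdgeTree m}, multiWeight m =
      Nat.choose (2 * d - 1) (d - 2) * (d - 1).factorial := by
  obtain ⟨N, rfl⟩ := Nat.exists_eq_add_of_le' hd
  calc ∑ᶠ m ∈ {m : Fin (N + 2) → Fin (N + 2) → ℕ | IsDoubledEdgeTree m}, multiWeight m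
      = ∑ G ∈ spanningTrees (N + 2), ∑ e ∈ edgePairs G, multiWeight (doubleEdge G e) :=
        finsum_isDoubledEdgeTree multiWeight
    _ = ∑ G ∈ spanningTrees (N + 2),
          (∏ j, (indegree G j)!) * ∑ j, (indegree G j + 1).choose 2 :=
        sum_congr rfl fun G _ => sum_multiWeight_doubleEdge G
    _ = (N + 1)! * (2 * N + 3).choose N := sum_spanningTrees_prod_factorial_mul_sum_choose N
    _ = (2 * (N + 2) - 1).choose (N + 2 - 2) * (N + 2 - 1)! := mul_comm _ _
end
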